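/- Let Ω ⊂ ℝⁿ be a bounded open set with finite perimeter and let u be a non-negative function in BV₀(Ω). Define G(s) := |D(u − u*(s))₊|(ℝⁿ) for s ∈ [0,∞), let σ be the positive Radon measure on [0,∞) with G(s) = σ((0,s]) for all s, and define v(s) := ∫_{(s,∞)} (n ω_n^{1/n} τ^{1−1/n})^{−1} dσ(τ). Then u*(s) ≤ v(s) for almost every s ∈ [0,∞). -/

import Mathlib

open MeasureTheory Filter Set Metric
open scoped ENNReal NNReal RealInnerProductSpace Topology

noncomputable section

def diverg {n : ℕ} (φ : EuclideanSpace ℝ (Fin n) → EuclideanSpace ℝ (Fin n))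
    (x : EuclideanSpace ℝ (Fin n)) : ℝ :=
  ∑ i, fderiv ℝ φ x (EuclideanSpace.single i (1:ℝ)) i

def varSet {n : ℕ} (w : EuclideanSpace ℝ (Fin n) → ℝ) : Set ℝ :=
  {p | ∃ φ : EuclideanSpace ℝ (Fin n) → EuclideanSpace ℝ (Fin n),
      ContDiff ℝ 1 φ ∧ HasCompactSupport φ ∧ (∀ x, ‖φ x‖ ≤ 1) ∧
      p = ∫ x, w x * diverg φ x}

def totalVar {n : ℕ} (w : EuclideanSpace ℝ (Fin n) → ℝ) : ℝ := sSup (varSet w)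

def IsBV {n : ℕ} (w : EuclideanSpace ℝ (Fin n) → ℝ) : Prop :=
  Integrable w ∧ BddAbove (varSet w)

def perim {n : ℕ} (E : Set (EuclideanSpace ℝ (Fin n))) : ℝ :=
  totalVar (E.indicator fun _ => (1 : ℝ))

def HasFinPerim {n : ℕ} (E : Set (EuclideanSpace ℝ (Fin n))) : Prop :=
  IsBV (E.indicator fun _ => (1 : ℝ))

def omegaN (n : ℕ) : ℝ := (volume (ball (0 : EuclideanSpace ℝ (Fin n)) 1)).toReal

def decRearr {α : Type*} [MeasurableSpace α] (μ : Measure α) (g : α → ℝ) (s : ℝ) : ℝ :=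
  sInf {t : ℝ | 0 < t ∧ μ {x | t < |g x|} ≤ ENNReal.ofReal s}

/-! ### One dimensional Brunn-Minkowski and Prekopa-Leindler -/

lemma bm_one {A B C : Set ℝ} (hA : MeasurableSet A) (hB : MeasurableSet B)
    (hAn : A.Nonempty) (hBn : B.Nonempty)
    (h : ∀ a ∈ A, ∀ b ∈ B, a + b ∈ C) : volume A + volume B ≤ volume C := by
  obtain ⟨a0, ha0⟩ := hAn
  obtain ⟨b0, hb0⟩ := hBn
  by_cases hA0 : volume A = 0
  · rw [hA0, zero_add, ← measure_preimage_add volume (-a0) B]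
    refine measure_mono fun x hx => ?_
    have := h a0 ha0 _ hx
    simpa using this
  by_cases hB0 : volume B = 0
  · rw [hB0, add_zero, ← measure_preimage_add volume (-b0) A]
    refine measure_mono fun x hx => ?_
    have := h _ hx b0 hb0
    simpa using this
  by_contra hlt
  push Not at hlt
  obtain ⟨y, hy, z, hz, hyz⟩ := ENNReal.exists_lt_add_of_lt_add hlt hA0 hB0
  obtain ⟨K, hKA, hK, hyK⟩ := hA.exists_lt_isCompact hy
  obtain ⟨L, hLB, hL, hzL⟩ := hB.exists_lt_isCompact hz
  have hKn : K.Nonempty := by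
    rw [nonempty_iff_ne_empty]; rintro rfl; simp at hyK
  have hLn : L.Nonempty := by
    rw [nonempty_iff_ne_empty]; rintro rfl; simp at hzL
  obtain ⟨k, hk⟩ := hK.exists_isGreatest hKn
  obtain ⟨l, hl⟩ := hL.exists_isLeast hLn
  have h1 : volume K = volume ((fun x => (-l) + x) ⁻¹' K) := (measure_preimage_add volume (-l) K).symm
  have h2 : volume L = volume ((fun x => (-k) + x) ⁻¹' L) := (measure_preimage_add volume (-k) L).symm
  have hm : MeasurableSet ((fun x => (-k) + x) ⁻¹' L) :=
    hL.measurableSet.preimage (measurable_const_add _)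
  have hd : AEDisjoint volume ((fun x => (-l) + x) ⁻¹' K) ((fun x => (-k) + x) ⁻¹' L) := by
    refine measure_mono_null (t := {k + l}) ?_ (by simp)
    rintro x ⟨hx1, hx2⟩
    have e1 := hk.2 hx1
    have e2 := hl.2 hx2
    simp only [mem_singleton_iff]
    linarith
  have h3 : volume K + volume L ≤ volume C := by
    rw [h1, h2, ← measure_union₀ hm.nullMeasurableSet hd]
    refine measure_mono ?_
    rintro x (hx | hx)
    · have := h _ (hKA hx) _ (hLB hl.1)
      simpa using this
    · have := h _ (hKA hk.1) _ (hLB hx)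
      simpa using this
  have h4 : y + z ≤ volume K + volume L := add_le_add hyK.le hzL.le
  exact absurd (hyz.trans_le (h4.trans h3)) (lt_irrefl _)

lemma layer_one {α : Type*} [MeasurableSpace α] (μ : Measure α) {F : α → ℝ≥0∞}
    (hF : Measurable F) (hF1 : ∀ x, F x ≤ 1) :
    ∫⁻ x, F x ∂μ = ∫⁻ t in Ioo (0:ℝ) 1, μ {x | ENNReal.ofReal t < F x} := by
  have hfin : ∀ x, F x ≠ ∞ := fun x => ((hF1 x).trans_lt ENNReal.one_lt_top).ne
  have h := lintegral_eq_lintegral_meas_lt μ (f := fun x => (F x).toReal)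
    (Eventually.of_forall fun x => ENNReal.toReal_nonneg) hF.ennreal_toReal.aemeasurable
  simp only [ENNReal.ofReal_toReal (hfin _)] at h
  rw [h]
  have hs : Ioi (0:ℝ) = Ioo 0 1 ∪ Ici 1 := by
    rw [Ioo_union_Ici_eq_Ioi]; norm_num
  rw [hs, lintegral_union measurableSet_Ici]
  · have : ∫⁻ t in Ici (1:ℝ), μ {x | t < (F x).toReal} = 0 := by
      rw [setLIntegral_congr_fun (g := fun _ => 0) measurableSet_Ici]
      · simp
      · intro t ht
        have : {x | t < (F x).toReal} = ∅ := by
          ext x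
          simp only [mem_ofPred_eq, mem_empty_iff_false, iff_false, not_lt]
          have := ENNReal.toReal_mono ENNReal.one_ne_top (hF1 x)
          simp at this
          exact this.trans ht
        simp [this]
    rw [this, add_zero]
    refine setLIntegral_congr_fun measurableSet_Ioo fun t ht => ?_
    congr 1
    ext x
    exact (ENNReal.ofReal_lt_iff_lt_toReal ht.1.le (hfin x)).symm
  · rw [Set.disjoint_left]
    intro x hx hx'
    exact absurd hx.2 (not_lt.2 hx')

open scoped Pointwise in
lemma scale_one (c : ℝ) (hc : 0 < c) (A : Set ℝ) :
    volume ((fun x => c * x) '' A) = ENNReal.ofReal c * volume A := by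
  have : (fun x => c * x) '' A = c • A := by ext; simp [Set.mem_smul_set]
  rw [this, Measure.addHaar_smul]
  simp [abs_of_pos hc]

lemma amgm (l : ℝ) (h0 : 0 < l) (h1 : l < 1) (a b : ℝ≥0∞) :
    a ^ (1 - l) * b ^ l ≤ ENNReal.ofReal (1 - l) * a + ENNReal.ofReal l * b := by
  by_cases ha : a = ∞
  · rw [ha, ENNReal.mul_top (by simpa using h1)]; simp
  by_cases hb : b = ∞
  · rw [hb, ENNReal.mul_top (by simpa using h0)]; simp
  lift a to ℝ≥0 using ha
  lift b to ℝ≥0 using hb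
  have := NNReal.geom_mean_le_arith_mean2_weighted (1 - l).toNNReal l.toNNReal a b (by
    rw [← Real.toNNReal_add (by linarith) h0.le]; simp)
  rw [Real.coe_toNNReal _ (by linarith), Real.coe_toNNReal _ h0.le] at this
  rw [← ENNReal.coe_rpow_of_nonneg _ (by linarith), ← ENNReal.coe_rpow_of_nonneg _ h0.le]
  unfold ENNReal.ofReal
  exact_mod_cast this

lemma pl_norm {F G H : ℝ → ℝ≥0∞} (hF : Measurable F) (hG : Measurable G) (hH : Measurable H)
    (hF1 : ∀ x, F x ≤ 1) (hG1 : ∀ x, G x ≤ 1)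
    (hFs : ∀ t < 1, ∃ x, t < F x) (hGs : ∀ t < 1, ∃ x, t < G x)
    (l : ℝ) (h0 : 0 < l) (h1 : l < 1)
    (h : ∀ x y, F x ^ (1 - l) * G y ^ l ≤ H ((1 - l) * x + l * y)) :
    (∫⁻ x, F x) ^ (1 - l) * (∫⁻ x, G x) ^ l ≤ ∫⁻ x, H x := by
  refine (amgm l h0 h1 _ _).trans ?_
  refine le_trans ?_ (lintegral_mono (f := fun x => min (H x) 1) fun x => min_le_left _ _)
  rw [layer_one volume hF hF1, layer_one volume hG hG1,
    layer_one volume (hH.min measurable_const) (fun x => min_le_right _ _)]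
  have mF : Measurable fun t : ℝ => volume {x | ENNReal.ofReal t < F x} := by
    refine Antitone.measurable fun s t hst => measure_mono fun x hx => ?_
    exact lt_of_le_of_lt (ENNReal.ofReal_le_ofReal hst) hx
  have mG : Measurable fun t : ℝ => volume {x | ENNReal.ofReal t < G x} := by
    refine Antitone.measurable fun s t hst => measure_mono fun x hx => ?_
    exact lt_of_le_of_lt (ENNReal.ofReal_le_ofReal hst) hx
  rw [← lintegral_const_mul _ mF, ← lintegral_const_mul _ mG,
    ← lintegral_add_left (mF.const_mul _)]
  refine setLIntegral_mono' measurableSet_Ioo fun t ht => ?_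
  have ht1 : ENNReal.ofReal t < 1 := by simpa using ht.2
  rw [← scale_one _ (by linarith : 0 < 1 - l), ← scale_one _ h0]
  obtain ⟨x0, hx0⟩ := hFs _ ht1
  obtain ⟨y0, hy0⟩ := hGs _ ht1
  refine bm_one ?_ ?_ ⟨_, mem_image_of_mem _ hx0⟩ ⟨_, mem_image_of_mem _ hy0⟩ ?_
  · have e : MeasurableSet {x | ENNReal.ofReal t < F x} := measurableSet_lt measurable_const hF
    exact (Homeomorph.mulLeft₀ (1 - l) (by linarith)).measurableEmbedding.measurableSet_image.2 e
  · have e : MeasurableSet {x | ENNReal.ofReal t < G x} := measurableSet_lt measurable_const hG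
    exact (Homeomorph.mulLeft₀ l h0.ne').measurableEmbedding.measurableSet_image.2 e
  · rintro _ ⟨x, hx, rfl⟩ _ ⟨y, hy, rfl⟩
    refine lt_min (lt_of_lt_of_le ?_ (h x y)) ht1
    have hp : 0 < 1 - l := by linarith
    calc ENNReal.ofReal t = ENNReal.ofReal t ^ (1 - l) * ENNReal.ofReal t ^ l := by
          rw [← ENNReal.rpow_add _ _ (by simpa using ht.1) ENNReal.ofReal_ne_top]; simp
      _ < F x ^ (1 - l) * G y ^ l := by
          exact ENNReal.mul_lt_mul (ENNReal.rpow_lt_rpow hx hp) (ENNReal.rpow_lt_rpow hy h0)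

lemma pl_one {F G H : ℝ → ℝ≥0∞} (hF : Measurable F) (hG : Measurable G) (hH : Measurable H)
    {M : ℝ≥0∞} (hM : M ≠ ∞) (hF1 : ∀ x, F x ≤ M) (hG1 : ∀ x, G x ≤ M)
    (l : ℝ) (h0 : 0 < l) (h1 : l < 1)
    (h : ∀ x y, F x ^ (1 - l) * G y ^ l ≤ H ((1 - l) * x + l * y)) :
    (∫⁻ x, F x) ^ (1 - l) * (∫⁻ x, G x) ^ l ≤ ∫⁻ x, H x := by
  have hl : 0 < 1 - l := by linarith
  set a := ⨆ x, F x with ha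
  set b := ⨆ x, G x with hb
  have hat : a ≠ ∞ := ((iSup_le hF1).trans_lt hM.lt_top).ne
  have hbt : b ≠ ∞ := ((iSup_le hG1).trans_lt hM.lt_top).ne
  by_cases ha0 : a = 0
  · have : ∀ x, F x = 0 := fun x => le_antisymm (ha0 ▸ le_iSup F x) zero_le
    simp [this, ENNReal.zero_rpow_of_pos hl]
  by_cases hb0 : b = 0
  · have : ∀ x, G x = 0 := fun x => le_antisymm (hb0 ▸ le_iSup G x) zero_le
    simp [this, ENNReal.zero_rpow_of_pos h0]
  set c := a ^ (1 - l) * b ^ l with hc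
  have hc0 : c ≠ 0 := by
    refine mul_ne_zero ?_ ?_
    · exact (ENNReal.rpow_pos (pos_iff_ne_zero.2 ha0) hat).ne'
    · exact (ENNReal.rpow_pos (pos_iff_ne_zero.2 hb0) hbt).ne'
  have hct : c ≠ ∞ :=
    ENNReal.mul_ne_top (ENNReal.rpow_ne_top_of_nonneg hl.le hat)
      (ENNReal.rpow_ne_top_of_nonneg h0.le hbt)
  have key := pl_norm (F := fun x => a⁻¹ * F x) (G := fun x => b⁻¹ * G x)
    (H := fun x => c⁻¹ * H x) (hF.const_mul _) (hG.const_mul _) (hH.const_mul _)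
    (fun x => by
      rw [← ENNReal.inv_mul_cancel ha0 hat]; exact mul_le_mul_right (le_iSup F x) _)
    (fun x => by
      rw [← ENNReal.inv_mul_cancel hb0 hbt]; exact mul_le_mul_right (le_iSup G x) _)
    (fun t ht => by
      have : a * t < a := by
        conv_rhs => rw [← mul_one a]
        exact (ENNReal.mul_lt_mul_iff_right ha0 hat).2 ht
      obtain ⟨x, hx⟩ := lt_iSup_iff.1 this
      refine ⟨x, ?_⟩
      rw [mul_comm, ← div_eq_mul_inv]
      rw [ENNReal.lt_div_iff_mul_lt (Or.inl ha0) (Or.inl hat), mul_comm]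
      exact hx)
    (fun t ht => by
      have : b * t < b := by
        conv_rhs => rw [← mul_one b]
        exact (ENNReal.mul_lt_mul_iff_right hb0 hbt).2 ht
      obtain ⟨x, hx⟩ := lt_iSup_iff.1 this
      refine ⟨x, ?_⟩
      rw [mul_comm, ← div_eq_mul_inv]
      rw [ENNReal.lt_div_iff_mul_lt (Or.inl hb0) (Or.inl hbt), mul_comm]
      exact hx)
    l h0 h1 (fun x y => by
      rw [ENNReal.mul_rpow_of_nonneg _ _ hl.le, ENNReal.mul_rpow_of_nonneg _ _ h0.le,
        ENNReal.inv_rpow, ENNReal.inv_rpow, mul_mul_mul_comm, ← ENNReal.mul_inv]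
      · exact mul_le_mul_right (h x y) _
      · right; exact ENNReal.rpow_ne_top_of_nonneg h0.le hbt
      · left; exact ENNReal.rpow_ne_top_of_nonneg hl.le hat)
  rw [lintegral_const_mul _ hF, lintegral_const_mul _ hG, lintegral_const_mul _ hH,
    ENNReal.mul_rpow_of_nonneg _ _ hl.le, ENNReal.mul_rpow_of_nonneg _ _ h0.le,
        ENNReal.inv_rpow, ENNReal.inv_rpow, mul_mul_mul_comm, ← ENNReal.mul_inv] at key
  · exact (ENNReal.mul_le_mul_iff_right (ENNReal.inv_ne_zero.2 hct) (ENNReal.inv_ne_top.2 hc0)).1 key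
  · right; exact ENNReal.rpow_ne_top_of_nonneg h0.le hbt
  · left; exact ENNReal.rpow_ne_top_of_nonneg hl.le hat

/-- Multiplicative Brunn-Minkowski in `ℝⁿ`. -/
lemma bm_pi (l : ℝ) (h0 : 0 < l) (h1 : l < 1) (n : ℕ) :
    ∀ (A B C : Set (Fin n → ℝ)), MeasurableSet A → MeasurableSet B → MeasurableSet C →
    Bornology.IsBounded A → Bornology.IsBounded B →
    (∀ a ∈ A, ∀ b ∈ B, (1 - l) • a + l • b ∈ C) →
    volume A ^ (1 - l) * volume B ^ l ≤ volume C := by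
  have hl : 0 < 1 - l := by linarith
  induction n with
  | zero =>
    intro A B C hA hB hC _ _ h
    rcases A.eq_empty_or_nonempty with rfl | ⟨a, ha⟩
    · simp [ENNReal.zero_rpow_of_pos hl]
    rcases B.eq_empty_or_nonempty with rfl | ⟨b, hb⟩
    · simp [ENNReal.zero_rpow_of_pos h0]
    have hc := h a ha b hb
    have e1 : ∀ S : Set (Fin 0 → ℝ), S.Nonempty → volume S = 1 := by
      intro S hS
      rw [Subsingleton.eq_univ_of_nonempty hS, volume_pi, Measure.pi_of_empty]
      simp
    rw [e1 A ⟨a, ha⟩, e1 B ⟨b, hb⟩, e1 C ⟨_, hc⟩]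
    simp
  | succ n ih =>
    intro A B C hA hB hC hAb hBb h
    let e := MeasurableEquiv.piFinSuccAbove (fun _ : Fin (n + 1) => ℝ) 0
    have he : MeasurePreserving e volume (volume.prod volume) :=
      volume_preserving_piFinSuccAbove (fun _ : Fin (n + 1) => ℝ) 0
    have hes : ∀ (x : ℝ) (y : Fin n → ℝ), e.symm (x, y) = Fin.cons x y := by
      intro x y
      simp [e, MeasurableEquiv.piFinSuccAbove, Fin.insertNthEquiv]
    have vol : ∀ S : Set (Fin (n+1) → ℝ), MeasurableSet S →
        volume S = ∫⁻ x : ℝ, volume {y : Fin n → ℝ | (Fin.cons x y : Fin (n+1) → ℝ) ∈ S} := by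
      intro S hS
      rw [← he.symm.measure_preimage hS.nullMeasurableSet, Measure.prod_apply (e.symm.measurable hS)]
      refine lintegral_congr fun x => ?_
      congr 1
      ext y
      simp only [mem_preimage, mem_ofPred_eq, hes]
    have mS : ∀ S : Set (Fin (n+1) → ℝ), MeasurableSet S →
        Measurable fun x : ℝ => volume {y : Fin n → ℝ | (Fin.cons x y : Fin (n+1) → ℝ) ∈ S} := by
      intro S hS
      have := measurable_measure_prodMk_left (ν := (volume : Measure (Fin n → ℝ)))
        (e.symm.measurable hS)
      convert this using 4 with x
      ext y
      simp only [mem_preimage, mem_ofPred_eq, hes]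
    have mS' : ∀ S : Set (Fin (n+1) → ℝ), MeasurableSet S → ∀ x : ℝ,
        MeasurableSet {y : Fin n → ℝ | (Fin.cons x y : Fin (n+1) → ℝ) ∈ S} := by
      intro S hS x
      have := measurable_prodMk_left (x := x) (e.symm.measurable hS)
      convert this using 1
      ext y
      simp only [mem_preimage, mem_ofPred_eq, hes]
    obtain ⟨R, hR⟩ := (hAb.union hBb).subset_closedBall 0
    have bS : ∀ S : Set (Fin (n+1) → ℝ), S ⊆ closedBall 0 R → ∀ x : ℝ,
        {y : Fin n → ℝ | (Fin.cons x y : Fin (n+1) → ℝ) ∈ S} ⊆ closedBall 0 R := by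
      intro S hS x y hy
      have h2 := hS hy
      simp only [mem_closedBall, dist_zero_right] at h2 ⊢
      have hR0 : 0 ≤ R := (norm_nonneg _).trans h2
      rw [pi_norm_le_iff_of_nonneg hR0] at h2 ⊢
      intro i
      simpa using h2 i.succ
    have bA := bS A (subset_union_left.trans hR)
    have bB := bS B (subset_union_right.trans hR)
    rw [vol A hA, vol B hB, vol C hC]
    refine pl_one (mS A hA) (mS B hB) (mS C hC)
      (M := volume (closedBall (0 : Fin n → ℝ) R)) measure_closedBall_lt_top.ne
      (fun x => measure_mono (bA x)) (fun x => measure_mono (bB x)) l h0 h1 ?_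
    intro x y
    refine ih _ _ _ (mS' A hA x) (mS' B hB y) (mS' C hC _) (isBounded_closedBall.subset (bA x))
      (isBounded_closedBall.subset (bB y)) ?_
    intro a ha b hb
    have := h _ ha _ hb
    simp only [mem_ofPred_eq]
    convert this using 1
    ext i
    refine Fin.cases ?_ (fun j => ?_) i <;> simp

lemma bm_euc (l : ℝ) (h0 : 0 < l) (h1 : l < 1) {n : ℕ}
    (A B C : Set (EuclideanSpace ℝ (Fin n))) (hA : MeasurableSet A) (hB : MeasurableSet B)
    (hC : MeasurableSet C) (hAb : Bornology.IsBounded A) (hBb : Bornology.IsBounded B)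
    (h : ∀ a ∈ A, ∀ b ∈ B, (1 - l) • a + l • b ∈ C) :
    volume A ^ (1 - l) * volume B ^ l ≤ volume C := by
  have hp := PiLp.volume_preserving_toLp (Fin n)
  have hb : ∀ S : Set (EuclideanSpace ℝ (Fin n)), Bornology.IsBounded S →
      Bornology.IsBounded ((WithLp.toLp 2 : (Fin n → ℝ) → EuclideanSpace ℝ (Fin n)) ⁻¹' S) := by
    intro S hS
    exact (PiLp.antilipschitzWith_toLp 2 (fun _ : Fin n => ℝ)).isBounded_preimage hS
  rw [← hp.measure_preimage hA.nullMeasurableSet, ← hp.measure_preimage hB.nullMeasurableSet,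
    ← hp.measure_preimage hC.nullMeasurableSet]
  exact bm_pi l h0 h1 n _ _ _ (hp.measurable hA) (hp.measurable hB) (hp.measurable hC)
    (hb _ hAb) (hb _ hBb) fun a ha b hb => by simpa using h _ ha _ hb

/-! ### Brunn-Minkowski with a ball, and the smooth isoperimetric estimate -/

lemma omegaN_pos (n : ℕ) : 0 < omegaN n :=
  ENNReal.toReal_pos (measure_ball_pos volume _ one_pos).ne' measure_ball_lt_top.ne

open scoped Pointwise in
lemma bm_ball {n : ℕ} (hn : 0 < n) {A C : Set (EuclideanSpace ℝ (Fin n))} (hA : MeasurableSet A)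
    (hC : MeasurableSet C) (hAb : Bornology.IsBounded A) {e m : ℝ} (he : 0 < e) (hm : 0 < m)
    (hmA : ENNReal.ofReal m ≤ volume A)
    (h : ∀ a ∈ A, ∀ x, dist x a < e → x ∈ C) :
    volume A + ENNReal.ofReal (n * omegaN n ^ ((1:ℝ) / n) * e * m ^ (1 - (1 : ℝ) / n))
      ≤ volume C := by
  have hn' : (0:ℝ) < n := by exact_mod_cast hn
  have hn1 : (1:ℝ) ≤ n := by exact_mod_cast hn
  have hAt : volume A ≠ ∞ := hAb.measure_lt_top.ne
  set V := (volume A).toReal with hV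
  have hVA : volume A = ENNReal.ofReal V := (ENNReal.ofReal_toReal hAt).symm
  have hmV : m ≤ V := (ENNReal.ofReal_le_iff_le_toReal hAt).1 hmA
  have hV0 : 0 < V := hm.trans_le hmV
  set w := omegaN n with hw
  have hw0 : 0 < w := omegaN_pos n
  have hwB : volume (ball (0 : EuclideanSpace ℝ (Fin n)) 1) = ENNReal.ofReal w :=
    (ENNReal.ofReal_toReal measure_ball_lt_top.ne).symm
  set a := V ^ ((1:ℝ) / n) with ha
  set b := e * w ^ ((1:ℝ)/n) with hb
  have ha0 : 0 < a := Real.rpow_pos_of_pos hV0 _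
  have hb0 : 0 < b := mul_pos he (Real.rpow_pos_of_pos hw0 _)
  have han : a ^ n = V := by
    rw [ha, ← Real.rpow_natCast, ← Real.rpow_mul hV0.le]
    field_simp; simp
  have hwn : (w ^ ((1:ℝ)/n)) ^ n = w := by
    rw [← Real.rpow_natCast, ← Real.rpow_mul hw0.le]
    field_simp; simp
  have han1 : a ^ (n - 1) = V ^ (1 - (1:ℝ)/n) := by
    rw [ha, ← Real.rpow_natCast, ← Real.rpow_mul hV0.le, Nat.cast_sub hn]
    congr 1
    field_simp; simp
  set l := b / (a + b) with hl
  have hl0 : 0 < l := by positivity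
  have hl1 : l < 1 := by rw [hl, div_lt_one (by positivity)]; linarith
  have hl2 : 1 - l = a / (a + b) := by rw [hl]; field_simp; ring
  have hl3 : 0 < 1 - l := by linarith
  have key := bm_euc l hl0 hl1 ((1 - l)⁻¹ • A) (ball 0 (e / l)) C
    (hA.const_smul₀ _) measurableSet_ball hC (hAb.smul₀ _) isBounded_ball (by
      rintro _ ⟨y, hy, rfl⟩ z hz
      simp only
      rw [smul_smul, mul_inv_cancel₀ hl3.ne', one_smul]
      refine h y hy _ ?_
      rw [dist_eq_norm, add_sub_cancel_left, norm_smul, Real.norm_of_nonneg hl0.le]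
      rw [mem_ball_zero_iff, lt_div_iff₀ hl0] at hz
      linarith)
  have e1 : volume ((1 - l)⁻¹ • A) = ENNReal.ofReal ((a + b) ^ n) := by
    rw [Measure.addHaar_smul, hVA, ← ENNReal.ofReal_mul (abs_nonneg _)]
    congr 1
    rw [finrank_euclideanSpace_fin, abs_of_pos (by positivity), hl2, ← han, ← mul_pow]
    congr 1
    field_simp
  have e2 : volume (ball (0 : EuclideanSpace ℝ (Fin n)) (e / l)) = ENNReal.ofReal ((a + b) ^ n) := by
    rw [Measure.addHaar_ball_of_pos _ _ (by positivity), hwB, ← ENNReal.ofReal_mul (by positivity)]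
    congr 1
    rw [finrank_euclideanSpace_fin]
    conv_lhs => rw [← hwn]
    rw [← mul_pow]
    congr 1
    rw [hl, div_div_eq_mul_div, div_mul_eq_mul_div, div_eq_iff hb0.ne']
    rw [hb]; ring
  rw [e1, e2, ← ENNReal.rpow_add _ _ (by simp; positivity) ENNReal.ofReal_ne_top] at key
  simp only [sub_add_cancel, ENNReal.rpow_one] at key
  refine le_trans ?_ key
  rw [hVA, ← ENNReal.ofReal_add hV0.le (by positivity)]
  refine ENNReal.ofReal_le_ofReal ?_
  have h1 := pow_add_mul_le_add_pow ha0.le (by linarith : 0 ≤ 2 * a + b) n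
  have h2 : m ^ (1 - (1:ℝ)/n) ≤ V ^ (1 - (1:ℝ)/n) := by
    refine Real.rpow_le_rpow hm.le hmV ?_
    rw [sub_nonneg, div_le_one hn']; exact hn1
  rw [han, han1] at h1
  refine le_trans ?_ h1
  have : n * w ^ ((1:ℝ)/n) * e * m ^ (1 - (1:ℝ)/n) = n * b * m ^ (1 - (1:ℝ)/n) := by
    rw [hb]; ring
  rw [this]
  have h3 : n * b * m ^ (1 - (1:ℝ)/n) ≤ n * b * V ^ (1 - (1:ℝ)/n) :=
    mul_le_mul_of_nonneg_left h2 (by positivity)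
  linarith

lemma layer_min {α : Type*} [MeasurableSpace α] (μ : Measure α) {w : α → ℝ} (hw : Measurable w)
    (hw0 : ∀ x, 0 ≤ w x) {c : ℝ} (hc : 0 < c) :
    ∫⁻ x, ENNReal.ofReal (min (w x) c) ∂μ = ∫⁻ t in Ioo 0 c, μ {x | t < w x} := by
  rw [lintegral_eq_lintegral_meas_lt μ (Eventually.of_forall fun x => le_min (hw0 x) hc.le)
    (hw.min measurable_const).aemeasurable]
  rw [← Ioo_union_Ici_eq_Ioi hc, lintegral_union measurableSet_Ici]
  · have : ∫⁻ t in Ici c, μ {x | t < min (w x) c} = 0 := by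
      rw [setLIntegral_congr_fun (g := fun _ => 0) measurableSet_Ici]
      · simp
      · intro t ht
        have : {x | t < min (w x) c} = ∅ := by
          ext x
          simp only [mem_ofPred_eq, mem_empty_iff_false, iff_false, not_lt]
          exact (min_le_right _ _).trans ht
        simp only [this, measure_empty]
    rw [this, add_zero]
    refine setLIntegral_congr_fun measurableSet_Ioo fun t ht => ?_
    congr 1
    ext x
    simp [ht.2]
  · rw [Set.disjoint_left]
    intro x hx hx'
    exact absurd hx.2 (not_lt.2 hx')

lemma iso_smooth {n : ℕ} (hn : 0 < n) {w : EuclideanSpace ℝ (Fin n) → ℝ} (hw : ContDiff ℝ 1 w)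
    (hwc : HasCompactSupport w) (hw0 : ∀ x, 0 ≤ w x) {c m : ℝ} (hc : 0 < c) (hm : 0 < m)
    (hmw : ENNReal.ofReal m ≤ volume {x | c < w x}) :
    ENNReal.ofReal (n * omegaN n ^ ((1:ℝ) / n) * m ^ (1 - (1 : ℝ) / n) * c) ≤
      ∫⁻ x in {x | w x < c}, ENNReal.ofReal ‖fderiv ℝ w x‖ := by
  have hD : Continuous (fderiv ℝ w) := hw.continuous_fderiv one_ne_zero
  have hDn : Measurable fun x => ‖fderiv ℝ w x‖ := hD.norm.measurable
  have hDu : UniformContinuous (fderiv ℝ w) :=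
    (hwc.fderiv ℝ).uniformContinuous_of_continuous hD
  set K := cthickening 1 (tsupport w) with hK
  have hKc : IsCompact K := hwc.isCompact.cthickening
  set k := n * omegaN n ^ ((1:ℝ) / n) with hk
  have hk0 : 0 ≤ k := by have := omegaN_pos n; positivity
  set M := m ^ (1 - (1 : ℝ) / n) with hM
  have hM0 : 0 ≤ M := by positivity
  have hmeasc : MeasurableSet {x | w x < c} := measurableSet_lt hw.continuous.measurable measurable_const
  have claim : ∀ η : ℝ, 0 < η → ENNReal.ofReal (k * M * c) ≤
      (∫⁻ x in {x | w x < c}, ENNReal.ofReal ‖fderiv ℝ w x‖) + ENNReal.ofReal η * volume K := by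
    intro η hη
    obtain ⟨δ, hδ, hδ'⟩ := Metric.uniformContinuous_iff.1 hDu η hη
    set e := min δ 1 with he
    have he0 : 0 < e := lt_min hδ one_pos
    set S := {x | w x < c} ∩ K with hS
    have hSm : MeasurableSet S := hmeasc.inter hKc.isClosed.measurableSet
    set Q : EuclideanSpace ℝ (Fin n) → ℝ := fun x =>
      min (w x) c + S.indicator (fun x => e * (‖fderiv ℝ w x‖ + η)) x with hQ
    have hQi0 : ∀ x, 0 ≤ S.indicator (fun x => e * (‖fderiv ℝ w x‖ + η)) x := fun x =>
      indicator_nonneg (fun x _ => by positivity) x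
    have hmi : Measurable (S.indicator (fun x => e * (‖fderiv ℝ w x‖ + η))) :=
      ((hDn.add_const _).const_mul _).indicator hSm
    have hQm : Measurable Q := (hw.continuous.measurable.min measurable_const).add hmi
    have hQ0 : ∀ x, 0 ≤ Q x := fun x => add_nonneg (le_min (hw0 x) hc.le) (hQi0 x)
    have hincl : ∀ t ∈ Ioo 0 c, ∀ y ∈ {x | t < w x}, ∀ x, dist x y < e → x ∈ {x | t < Q x} := by
      intro t ht y hy x hxy
      simp only [mem_ofPred_eq] at hy ⊢
      rcases le_or_gt c (w x) with hcx | hcx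
      · have : Q x ≥ c := by
          simp only [hQ, min_eq_right hcx]; linarith [hQi0 x]
        linarith [ht.2]
      · have hyS : y ∈ tsupport w := subset_tsupport w (by
          simp only [Function.mem_support]; linarith [ht.1])
        have hxS : x ∈ S := by
          refine ⟨hcx, mem_cthickening_of_dist_le x y 1 _ hyS ?_⟩
          exact hxy.le.trans (min_le_right _ _)
        have hmv := Convex.norm_image_sub_le_of_norm_fderiv_le (𝕜 := ℝ) (f := w) (s := ball x e)
          (C := ‖fderiv ℝ w x‖ + η) (x := x) (y := y)
          (fun z _ => (hw.differentiable one_ne_zero) z) (fun z hz => by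
            have := hδ' (a := z) (b := x) (lt_of_lt_of_le hz (min_le_left _ _))
            rw [dist_eq_norm] at this
            have h2 := norm_sub_norm_le (fderiv ℝ w z) (fderiv ℝ w x)
            linarith) (convex_ball _ _) (mem_ball_self he0) (by rwa [mem_ball, dist_comm])
        have h3 : ‖y - x‖ ≤ e := by rw [← dist_eq_norm, dist_comm]; exact hxy.le
        have h4 : (‖fderiv ℝ w x‖ + η) * ‖y - x‖ ≤ (‖fderiv ℝ w x‖ + η) * e :=
          mul_le_mul_of_nonneg_left h3 (by positivity)
        have h5 := (le_abs_self _).trans (hmv.trans h4)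
        simp only [hQ, min_eq_left hcx.le, indicator_of_mem hxS]
        linarith
    have hbd : ∀ t, 0 < t → Bornology.IsBounded {x | t < w x} := fun t ht =>
      hwc.isCompact.isBounded.subset fun x hx => subset_tsupport w (by
        simp only [mem_ofPred_eq] at hx
        simp only [Function.mem_support]; linarith)
    have hlow : (∫⁻ x, ENNReal.ofReal (min (w x) c)) + ENNReal.ofReal (k * e * M) * ENNReal.ofReal c
        ≤ ∫⁻ x, ENNReal.ofReal (Q x) := by
      rw [layer_min _ hw.continuous.measurable hw0 hc]
      calc _ = ∫⁻ t in Ioo 0 c, (volume {x | t < w x} + ENNReal.ofReal (k * e * M)) := by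
            rw [lintegral_add_right _ measurable_const]; simp
        _ ≤ ∫⁻ t in Ioo 0 c, volume {x | t < Q x} := by
            refine setLIntegral_mono' measurableSet_Ioo fun t ht => ?_
            refine bm_ball hn (measurableSet_lt measurable_const hw.continuous.measurable)
              (measurableSet_lt measurable_const hQm) (hbd t ht.1) he0 hm ?_ (hincl t ht)
            exact hmw.trans (measure_mono fun x hx => lt_trans ht.2 hx)
        _ ≤ ∫⁻ t in Ioi 0, volume {x | t < Q x} :=
            lintegral_mono_set Ioo_subset_Ioi_self
        _ = _ := (lintegral_eq_lintegral_meas_lt volume (Eventually.of_forall hQ0)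
              hQm.aemeasurable).symm
    have hfin : ∫⁻ x, ENNReal.ofReal (min (w x) c) ≠ ∞ := by
      have hi : Integrable w := hw.continuous.integrable_of_hasCompactSupport hwc
      refine (lt_of_le_of_lt (lintegral_mono fun x => ?_) hi.lintegral_lt_top).ne
      exact ENNReal.ofReal_le_ofReal (min_le_left _ _)
    have hup : ∫⁻ x, ENNReal.ofReal (Q x) ≤ (∫⁻ x, ENNReal.ofReal (min (w x) c)) +
        ENNReal.ofReal e * ((∫⁻ x in {x | w x < c}, ENNReal.ofReal ‖fderiv ℝ w x‖) +
          ENNReal.ofReal η * volume K) := by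
      simp only [hQ]
      have : ∀ x, ENNReal.ofReal (min (w x) c +
          S.indicator (fun x => e * (‖fderiv ℝ w x‖ + η)) x) =
          ENNReal.ofReal (min (w x) c) +
          S.indicator (fun x => ENNReal.ofReal e * (ENNReal.ofReal ‖fderiv ℝ w x‖ + ENNReal.ofReal η)) x := by
        intro x
        rw [ENNReal.ofReal_add (le_min (hw0 x) hc.le) (hQi0 x)]
        congr 1
        by_cases hx : x ∈ S
        · simp only [indicator_of_mem hx]
          rw [ENNReal.ofReal_mul he0.le, ENNReal.ofReal_add (norm_nonneg _) hη.le]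
        · simp [indicator_of_notMem hx]
      simp only [this]
      rw [lintegral_add_left (hw.continuous.measurable.min measurable_const).ennreal_ofReal,
        lintegral_indicator hSm, lintegral_const_mul _ (hDn.ennreal_ofReal.add_const _),
        lintegral_add_left hDn.ennreal_ofReal]
      gcongr
      · exact inter_subset_left
      · rw [lintegral_const, Measure.restrict_apply_univ]
        gcongr
        exact inter_subset_right
    have h6 := (ENNReal.add_le_add_iff_left hfin).1 (hlow.trans hup)
    have h7 : ENNReal.ofReal (k * e * M) * ENNReal.ofReal c =
        ENNReal.ofReal e * ENNReal.ofReal (k * M * c) := by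
      rw [← ENNReal.ofReal_mul (by positivity), ← ENNReal.ofReal_mul (by positivity)]
      congr 1; ring
    rw [h7] at h6
    exact (ENNReal.mul_le_mul_iff_right (by simpa using he0) ENNReal.ofReal_ne_top).1 h6
  have hlim : Tendsto (fun η : ℝ => (∫⁻ x in {x | w x < c}, ENNReal.ofReal ‖fderiv ℝ w x‖) +
      ENNReal.ofReal η * volume K) (𝓝[>] 0)
      (𝓝 ((∫⁻ x in {x | w x < c}, ENNReal.ofReal ‖fderiv ℝ w x‖) + 0 * volume K)) := by
    refine tendsto_const_nhds.add (ENNReal.Tendsto.mul_const ?_ (Or.inr hKc.measure_lt_top.ne))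
    have : Tendsto ENNReal.ofReal (𝓝 0) (𝓝 (ENNReal.ofReal 0)) :=
      ENNReal.continuous_ofReal.tendsto 0
    rw [ENNReal.ofReal_zero] at this
    exact this.mono_left nhdsWithin_le_nhds
  rw [zero_mul, add_zero] at hlim
  exact ge_of_tendsto hlim (eventually_nhdsWithin_of_forall fun η hη => claim η hη)

/-! ### Divergence, integration by parts and truncation -/

lemma diverg_continuous {n : ℕ} {φ : EuclideanSpace ℝ (Fin n) → EuclideanSpace ℝ (Fin n)}
    (hφ : ContDiff ℝ 1 φ) : Continuous (diverg φ) := by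
  unfold diverg
  have hD : Continuous (fderiv ℝ φ) := hφ.continuous_fderiv one_ne_zero
  refine continuous_finsetSum _ fun i _ => ?_
  have : Continuous fun x => fderiv ℝ φ x (EuclideanSpace.single i (1:ℝ)) :=
    hD.clm_apply continuous_const
  fun_prop

lemma diverg_compact {n : ℕ} {φ : EuclideanSpace ℝ (Fin n) → EuclideanSpace ℝ (Fin n)}
    (hφ : HasCompactSupport φ) : HasCompactSupport (diverg φ) := by
  refine (hφ.fderiv ℝ).mono fun x hx => ?_
  simp only [Function.mem_support] at hx ⊢
  intro h
  apply hx
  simp [diverg, h]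

lemma diverg_bound {n : ℕ} {φ : EuclideanSpace ℝ (Fin n) → EuclideanSpace ℝ (Fin n)}
    (hφ : ContDiff ℝ 1 φ) (hc : HasCompactSupport φ) : ∃ C, ∀ x, ‖diverg φ x‖ ≤ C :=
  (diverg_continuous hφ).bounded_above_of_compact_support (diverg_compact hc)

lemma ibp {n : ℕ} {φ : EuclideanSpace ℝ (Fin n) → EuclideanSpace ℝ (Fin n)}
    (hφ : ContDiff ℝ 1 φ) (hc : HasCompactSupport φ) {g : EuclideanSpace ℝ (Fin n) → ℝ}
    (hg : ContDiff ℝ 1 g) : ∫ x, g x * diverg φ x = - ∫ x, fderiv ℝ g x (φ x) := by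
  have hφi : ∀ i, ContDiff ℝ 1 fun x => φ x i := fun i => by
    have := (EuclideanSpace.proj i : EuclideanSpace ℝ (Fin n) →L[ℝ] ℝ).contDiff (n := 1)
    exact this.comp hφ
  have hci : ∀ i, HasCompactSupport fun x => φ x i := fun i =>
    hc.mono fun x hx => by
      simp only [Function.mem_support] at hx ⊢
      intro h; apply hx; simp [h]
  have hder : ∀ i x v, fderiv ℝ φ x v i = fderiv ℝ (fun x => φ x i) x v := fun i x v => by
    have h1 := ((hφ.differentiable one_ne_zero) x).hasFDerivAt
    have h2 := ((EuclideanSpace.proj i : EuclideanSpace ℝ (Fin n) →L[ℝ] ℝ).hasFDerivAt).comp x h1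
    have h3 : fderiv ℝ (fun x => φ x i) x = _ := h2.fderiv
    rw [h3]; rfl
  have hgD : Continuous (fderiv ℝ g) := hg.continuous_fderiv one_ne_zero
  have i1 : ∀ i, Integrable fun x => g x * fderiv ℝ (fun x => φ x i) x (EuclideanSpace.single i 1) := by
    intro i
    refine Continuous.integrable_of_hasCompactSupport ?_ ?_
    · exact hg.continuous.mul (((hφi i).continuous_fderiv one_ne_zero).clm_apply continuous_const)
    · refine ((hci i).fderiv ℝ).mono fun x hx => ?_
      simp only [Function.mem_support] at hx ⊢
      intro h; apply hx; simp [h]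
  have i2 : ∀ i, Integrable fun x => fderiv ℝ g x (EuclideanSpace.single i 1) * φ x i := by
    intro i
    refine Continuous.integrable_of_hasCompactSupport ?_ ?_
    · exact (hgD.clm_apply continuous_const).mul (hφi i).continuous
    · exact (hci i).mul_left
  have i3 : ∀ i, Integrable fun x => g x * φ x i := fun i =>
    (hg.continuous.mul (hφi i).continuous).integrable_of_hasCompactSupport (hci i).mul_left
  have e1 : ∀ x, g x * diverg φ x =
      ∑ i, g x * fderiv ℝ (fun x => φ x i) x (EuclideanSpace.single i 1) := by
    intro x
    rw [diverg, Finset.mul_sum]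
    simp only [hder]
  have e2 : ∀ x, fderiv ℝ g x (φ x) = ∑ i, fderiv ℝ g x (EuclideanSpace.single i 1) * φ x i := by
    intro x
    have : φ x = ∑ i, (φ x i) • (EuclideanSpace.single i (1:ℝ)) := by
      ext j
      simp [Finset.sum_apply, Pi.single_apply]
    conv_lhs => rw [this]
    simp [mul_comm]
  simp only [e1, e2]
  rw [integral_finsetSum _ fun i _ => i1 i, integral_finsetSum _ fun i _ => i2 i,
    ← Finset.sum_neg_distrib]
  refine Finset.sum_congr rfl fun i _ => ?_
  exact integral_mul_fderiv_eq_neg_fderiv_mul_of_integrable (i2 i) (i1 i) (i3 i)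
    (fun x _ => (hg.differentiable one_ne_zero) x) (fun x _ => ((hφi i).differentiable one_ne_zero) x)

lemma hasDerivAt_possq (x : ℝ) : HasDerivAt (fun t : ℝ => max t 0 ^ 2) (2 * max x 0) x := by
  rcases lt_trichotomy x 0 with hx | hx | hx
  · rw [max_eq_right hx.le]
    have : (fun t : ℝ => max t 0 ^ 2) =ᶠ[𝓝 x] fun _ => 0 := by
      filter_upwards [Iio_mem_nhds hx] with t ht
      rw [max_eq_right (le_of_lt ht)]; simp
    simpa using (hasDerivAt_const x (0:ℝ)).congr_of_eventuallyEq this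
  · subst hx
    rw [hasDerivAt_iff_isLittleO]
    simp only [max_self, sub_zero, mul_zero, smul_zero]
    norm_num
    have h1 : (fun t : ℝ => max t 0 ^ 2) =O[𝓝 0] fun t => t ^ 2 := by
      refine Asymptotics.IsBigO.of_bound 1 (Eventually.of_forall fun t => ?_)
      rw [one_mul, Real.norm_of_nonneg (by positivity), Real.norm_of_nonneg (by positivity)]
      rcases le_total t 0 with h | h
      · rw [max_eq_right h]; nlinarith
      · rw [max_eq_left h]
    refine h1.trans_isLittleO ?_
    simpa using Asymptotics.isLittleO_pow_pow (𝕜 := ℝ) (m := 1) (n := 2) (by norm_num)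
  · rw [max_eq_left hx.le]
    have : (fun t : ℝ => max t 0 ^ 2) =ᶠ[𝓝 x] fun t => t ^ 2 := by
      filter_upwards [Ioi_mem_nhds hx] with t ht
      rw [max_eq_left (le_of_lt ht)]
    simpa using (hasDerivAt_pow 2 x).congr_of_eventuallyEq this

/-- smooth positive part -/
def bet (d t : ℝ) : ℝ := √(max t 0 ^ 2 + d ^ 2) - d

lemma bet_deriv {d : ℝ} (hd : 0 < d) (x : ℝ) :
    HasDerivAt (bet d) (max x 0 / √(max x 0 ^ 2 + d ^ 2)) x := by
  have h := ((hasDerivAt_possq x).add_const (d ^ 2)).sqrt (by positivity)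
  have h2 := h.sub_const d
  rw [mul_div_mul_left _ _ two_ne_zero] at h2
  exact h2

lemma bet_contDiff {d : ℝ} (hd : 0 < d) : ContDiff ℝ 1 (bet d) := by
  rw [contDiff_one_iff_deriv]
  refine ⟨fun x => (bet_deriv hd x).differentiableAt, ?_⟩
  have : deriv (bet d) = fun x => max x 0 / √(max x 0 ^ 2 + d ^ 2) :=
    funext fun x => (bet_deriv hd x).deriv
  rw [this]
  refine Continuous.div (by fun_prop) (by fun_prop) fun x => ?_
  positivity

lemma bet_near {d : ℝ} (hd : 0 < d) (t : ℝ) : |bet d t - max t 0| ≤ d := by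
  have h0 : 0 ≤ max t 0 := le_max_right _ _
  have h1 : max t 0 ≤ √(max t 0 ^ 2 + d ^ 2) := Real.le_sqrt_of_sq_le (by nlinarith)
  have h2 : √(max t 0 ^ 2 + d ^ 2) ≤ max t 0 + d := by
    rw [Real.sqrt_le_left (by positivity)]; nlinarith
  rw [bet, abs_le]
  constructor <;> linarith

lemma trunc_smooth {n : ℕ} {φ : EuclideanSpace ℝ (Fin n) → EuclideanSpace ℝ (Fin n)}
    (hφ : ContDiff ℝ 1 φ) (hc : HasCompactSupport φ) (hφ1 : ∀ x, ‖φ x‖ ≤ 1)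
    {w : EuclideanSpace ℝ (Fin n) → ℝ} (hw : ContDiff ℝ 1 w) (hwc : HasCompactSupport w) (c : ℝ) :
    ∫ x, max (w x - c) 0 * diverg φ x ≤ ∫ x in {x | c < w x}, ‖fderiv ℝ w x‖ := by
  have hD : Continuous (fderiv ℝ w) := hw.continuous_fderiv one_ne_zero
  have hDi : Integrable fun x => ‖fderiv ℝ w x‖ :=
    hD.norm.integrable_of_hasCompactSupport (hwc.fderiv ℝ).norm
  have hmeas : MeasurableSet {x | c < w x} := measurableSet_lt measurable_const hw.continuous.measurable
  have hdc := diverg_continuous hφ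
  have hds := diverg_compact hc
  have hdi : Integrable (diverg φ) := hdc.integrable_of_hasCompactSupport hds
  have claim : ∀ d : ℝ, 0 < d → ∫ x, max (w x - c) 0 * diverg φ x ≤
      (∫ x in {x | c < w x}, ‖fderiv ℝ w x‖) + d * ∫ x, ‖diverg φ x‖ := by
    intro d hd
    have hg : ContDiff ℝ 1 fun x => bet d (w x - c) :=
      (bet_contDiff hd).comp (hw.sub contDiff_const)
    have hI := ibp hφ hc hg
    have hgd : ∀ x, fderiv ℝ (fun x => bet d (w x - c)) x =
        (max (w x - c) 0 / √(max (w x - c) 0 ^ 2 + d ^ 2)) • fderiv ℝ w x := by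
      intro x
      have h1 := (((hw.differentiable one_ne_zero) x).hasFDerivAt.sub_const c)
      exact ((bet_deriv hd (w x - c)).comp_hasFDerivAt x h1).fderiv
    have hle : - ∫ x, fderiv ℝ (fun x => bet d (w x - c)) x (φ x) ≤
        ∫ x in {x | c < w x}, ‖fderiv ℝ w x‖ := by
      rw [← integral_indicator hmeas, ← integral_neg]
      refine integral_mono_ae ?_ (hDi.indicator hmeas) ?_
      · refine (Continuous.integrable_of_hasCompactSupport ?_ ?_).neg
        · exact (hg.continuous_fderiv one_ne_zero).clm_apply hφ.continuous
        · refine hc.mono fun x hx => ?_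
          simp only [Function.mem_support] at hx ⊢
          intro h; apply hx; simp [h]
      · refine Eventually.of_forall fun x => ?_
        simp only [hgd]
        by_cases hx : c < w x
        · rw [indicator_of_mem (show x ∈ {x | c < w x} from hx)]
          have hq : max (w x - c) 0 / √(max (w x - c) 0 ^ 2 + d ^ 2) ≤ 1 := by
            rw [div_le_one (by positivity)]
            exact Real.le_sqrt_of_sq_le (by nlinarith)
          have hq0 : 0 ≤ max (w x - c) 0 / √(max (w x - c) 0 ^ 2 + d ^ 2) := by positivity
          have h3 : ‖fderiv ℝ w x (φ x)‖ ≤ ‖fderiv ℝ w x‖ := by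
            refine ((fderiv ℝ w x).le_opNorm _).trans ?_
            exact mul_le_of_le_one_right (norm_nonneg _) (hφ1 x)
          refine (neg_le_abs _).trans ?_
          rw [smul_apply, smul_eq_mul, abs_mul, abs_of_nonneg hq0]
          exact (mul_le_of_le_one_left (abs_nonneg _) hq).trans h3
        · rw [indicator_of_notMem (show x ∉ {x | c < w x} from hx),
            max_eq_right (by linarith)]
          simp
    have hdiff : ∫ x, max (w x - c) 0 * diverg φ x ≤
        (∫ x, bet d (w x - c) * diverg φ x) + d * ∫ x, ‖diverg φ x‖ := by
      rw [← integral_const_mul, ← integral_add]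
      · refine integral_mono ?_ ?_ fun x => ?_
        · exact Continuous.integrable_of_hasCompactSupport
            (((hw.continuous.sub continuous_const).max continuous_const).mul hdc) hds.mul_left
        · exact (Continuous.integrable_of_hasCompactSupport
            (hg.continuous.mul hdc) hds.mul_left).add (hdi.norm.const_mul _)
        · have h4 := bet_near hd (w x - c)
          have h5 : (max (w x - c) 0 - bet d (w x - c)) * diverg φ x ≤ d * ‖diverg φ x‖ := by
            refine (le_abs_self _).trans ?_
            rw [abs_mul, abs_sub_comm]
            exact mul_le_mul_of_nonneg_right h4 (abs_nonneg _)
          simp only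
          linarith
      · exact Continuous.integrable_of_hasCompactSupport
            (hg.continuous.mul hdc) hds.mul_left
      · exact hdi.norm.const_mul _
    linarith
  have hlim : Tendsto (fun d : ℝ => (∫ x in {x | c < w x}, ‖fderiv ℝ w x‖) + d * ∫ x, ‖diverg φ x‖)
      (𝓝[>] 0) (𝓝 ((∫ x in {x | c < w x}, ‖fderiv ℝ w x‖) + 0 * ∫ x, ‖diverg φ x‖)) := by
    refine Tendsto.mono_left (Continuous.tendsto (by fun_prop) 0) nhdsWithin_le_nhds
  rw [zero_mul, add_zero] at hlim
  exact ge_of_tendsto hlim (eventually_nhdsWithin_of_forall fun d hd => claim d hd)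

lemma grad_le_var {n : ℕ} {w : EuclideanSpace ℝ (Fin n) → ℝ} (hw : ContDiff ℝ 2 w)
    (hwc : HasCompactSupport w) {V : ℝ}
    (hV : ∀ φ : EuclideanSpace ℝ (Fin n) → EuclideanSpace ℝ (Fin n),
      ContDiff ℝ 1 φ → HasCompactSupport φ → (∀ x, ‖φ x‖ ≤ 1) → ∫ x, w x * diverg φ x ≤ V) :
    ∫ x, ‖fderiv ℝ w x‖ ≤ V := by
  have hw1 : ContDiff ℝ 1 w := hw.of_le (by norm_num)
  have hD : Continuous (fderiv ℝ w) := hw1.continuous_fderiv one_ne_zero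
  have hDi : Integrable fun x => ‖fderiv ℝ w x‖ :=
    hD.norm.integrable_of_hasCompactSupport (hwc.fderiv ℝ).norm
  let g : EuclideanSpace ℝ (Fin n) → EuclideanSpace ℝ (Fin n) := fun x =>
    (InnerProductSpace.toDual ℝ _).symm (fderiv ℝ w x)
  have hgn : ∀ x, ‖g x‖ = ‖fderiv ℝ w x‖ := fun x => LinearIsometryEquiv.norm_map _ _
  have hgg : ∀ x, fderiv ℝ w x (g x) = ‖fderiv ℝ w x‖ ^ 2 := by
    intro x
    rw [← hgn, ← real_inner_self_eq_norm_sq]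
    exact (InnerProductSpace.toDual_symm_apply (𝕜 := ℝ) (y := fderiv ℝ w x) (x := g x)).symm
  have hgC : ContDiff ℝ 1 g := by
    have h1 : ContDiff ℝ 1 (fderiv ℝ w) := hw.fderiv_right (by norm_num)
    exact (InnerProductSpace.toDual ℝ (EuclideanSpace ℝ (Fin n))).symm.contDiff.comp h1
  have hgs : HasCompactSupport g := (hwc.fderiv ℝ).mono fun x hx => by
    simp only [Function.mem_support] at hx ⊢
    intro h; apply hx; simp [g, h]
  set K := tsupport w with hK
  have hKm : MeasurableSet K := (isClosed_tsupport w).measurableSet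
  have hKt : volume K ≠ ∞ := hwc.isCompact.measure_lt_top.ne
  have claim : ∀ d : ℝ, 0 < d → ∫ x, ‖fderiv ℝ w x‖ ≤ V + d * volume.real K := by
    intro d hd
    set q : EuclideanSpace ℝ (Fin n) → ℝ := fun x => √(‖g x‖ ^ 2 + d ^ 2) with hq
    have hq0 : ∀ x, 0 < q x := fun x => by simp only [hq]; positivity
    have hqC : ContDiff ℝ 1 q := by
      refine ContDiff.sqrt ?_ fun x => by positivity
      exact (hgC.norm_sq ℝ).add contDiff_const
    have hqi : ContDiff ℝ 1 fun x => (q x)⁻¹ := hqC.inv fun x => (hq0 x).ne'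
    have hgq : ∀ x, ‖g x‖ ≤ q x := fun x => Real.le_sqrt_of_sq_le (by nlinarith)
    have hqg : ∀ x, q x ≤ ‖g x‖ + d := fun x => by
      simp only [hq]
      rw [Real.sqrt_le_left (by positivity)]; nlinarith [norm_nonneg (g x)]
    have hφC : ContDiff ℝ 1 fun x => -((q x)⁻¹ • g x) := (hqi.smul hgC).neg
    have hφs : HasCompactSupport fun x => -((q x)⁻¹ • g x) := hgs.mono fun x hx => by
      simp only [Function.mem_support] at hx ⊢
      intro h; apply hx; simp [h]
    have h1 := hV _ hφC hφs (fun x => by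
      rw [norm_neg, norm_smul, norm_inv, Real.norm_of_nonneg (hq0 x).le, inv_mul_le_iff₀ (hq0 x)]
      simpa using hgq x)
    rw [ibp hφC hφs hw1] at h1
    have h2 : ∀ x, ‖fderiv ℝ w x‖ - K.indicator (fun _ => d) x ≤ -fderiv ℝ w x (-((q x)⁻¹ • g x)) := by
      intro x
      rw [map_neg, neg_neg, map_smul, hgg, ← hgn, smul_eq_mul]
      by_cases hx : x ∈ K
      · rw [indicator_of_mem hx, inv_mul_eq_div, le_div_iff₀ (hq0 x)]
        rcases le_total ‖g x‖ d with h | h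
        · nlinarith [hq0 x, norm_nonneg (g x)]
        · nlinarith [hqg x, norm_nonneg (g x)]
      · have : g x = 0 := by
          simp only [g, fderiv_of_notMem_tsupport (𝕜 := ℝ) hx, map_zero]
        rw [indicator_of_notMem hx, this]; simp
    have h3 : Integrable (K.indicator (fun _ => d)) volume :=
      (integrable_indicator_iff hKm).2 (integrableOn_const hKt)
    have h4 := integral_mono (hDi.sub h3) (Integrable.neg (Continuous.integrable_of_hasCompactSupport
      (hD.clm_apply hφC.continuous) (hφs.mono fun x hx => by
        simp only [Function.mem_support] at hx ⊢
        intro h; apply hx; rw [h]; simp))) h2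
    simp only [Pi.sub_apply, Pi.neg_apply] at h4
    rw [integral_sub hDi h3, integral_indicator hKm, setIntegral_const, integral_neg, smul_eq_mul] at h4
    linarith
  have hlim : Tendsto (fun d : ℝ => V + d * volume.real K)
      (𝓝[>] 0) (𝓝 (V + 0 * volume.real K)) := by
    refine Tendsto.mono_left (Continuous.tendsto (by fun_prop) 0) nhdsWithin_le_nhds
  rw [zero_mul, add_zero] at hlim
  exact ge_of_tendsto hlim (eventually_nhdsWithin_of_forall fun d hd => claim d hd)

/-! ### Mollification -/

open scoped Convolution in
lemma moll_var {n : ℕ} {f r : EuclideanSpace ℝ (Fin n) → ℝ} (hf : Integrable f)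
    (hr : Continuous r) (hrs : HasCompactSupport r) (hr0 : ∀ x, 0 ≤ r x) (hr1 : ∫ x, r x = 1)
    {V : ℝ} (hV : ∀ p ∈ varSet f, p ≤ V)
    {φ : EuclideanSpace ℝ (Fin n) → EuclideanSpace ℝ (Fin n)}
    (hφ : ContDiff ℝ 1 φ) (hc : HasCompactSupport φ) (hφ1 : ∀ x, ‖φ x‖ ≤ 1) :
    ∫ x, (r ⋆[ContinuousLinearMap.lsmul ℝ ℝ] f) x * diverg φ x ≤ V := by
  have hri : Integrable r := hr.integrable_of_hasCompactSupport hrs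
  obtain ⟨C, hC⟩ := diverg_bound hφ hc
  have hdc := diverg_continuous hφ
  have hInt : Integrable (fun p : EuclideanSpace ℝ (Fin n) × EuclideanSpace ℝ (Fin n) =>
      (r p.2 * f (p.1 - p.2)) * diverg φ p.1) (volume.prod volume) := by
    have h1 := hri.convolution_integrand (ContinuousLinearMap.lsmul ℝ ℝ) hf
    simp only [ContinuousLinearMap.lsmul_apply, smul_eq_mul] at h1
    exact h1.mul_bdd (c := C) (hdc.comp continuous_fst).aestronglyMeasurable
      (Eventually.of_forall fun p => hC p.1)
  have hz : ∀ z, ∫ x, f (x - z) * diverg φ x ≤ V := by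
    intro z
    have h1 : ∫ x, f (x - z) * diverg φ x = ∫ x, f x * diverg φ (x + z) := by
      rw [← integral_add_right_eq_self (fun x => f (x - z) * diverg φ x) z]
      simp
    rw [h1]
    refine hV _ ⟨fun x => φ (x + z), hφ.comp (contDiff_id.add contDiff_const), ?_,
      fun x => hφ1 _, ?_⟩
    · exact hc.comp_homeomorph (Homeomorph.addRight z)
    · congr 1
      ext x
      congr 1
      simp only [diverg]
      rw [fderiv_comp_add_right]
  calc ∫ x, (r ⋆[ContinuousLinearMap.lsmul ℝ ℝ] f) x * diverg φ x
      = ∫ x, ∫ z, (r z * f (x - z)) * diverg φ x := by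
        refine integral_congr_ae (Eventually.of_forall fun x => ?_)
        simp only [convolution_def, ContinuousLinearMap.lsmul_apply, smul_eq_mul]
        rw [integral_mul_const]
    _ = ∫ z, ∫ x, (r z * f (x - z)) * diverg φ x := integral_integral_swap hInt
    _ = ∫ z, r z * ∫ x, f (x - z) * diverg φ x := by
        simp only [mul_assoc, integral_const_mul]
    _ ≤ ∫ z, r z * V := by
        refine integral_mono ?_ (hri.mul_const V) fun z => mul_le_mul_of_nonneg_left (hz z) (hr0 z)
        have := hInt.integral_prod_right
        simpa only [mul_assoc, integral_const_mul] using this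
    _ = V := by rw [integral_mul_const, hr1, one_mul]

open scoped Convolution in
lemma exists_approx {n : ℕ} {f : EuclideanSpace ℝ (Fin n) → ℝ} (hf : Integrable f)
    (hfs : HasCompactSupport f) (hf0 : ∀ x, 0 ≤ f x) {V : ℝ} (hV : ∀ p ∈ varSet f, p ≤ V) :
    ∃ w : ℕ → EuclideanSpace ℝ (Fin n) → ℝ, (∀ k, ContDiff ℝ 2 (w k)) ∧
      (∀ k, HasCompactSupport (w k)) ∧ (∀ k x, 0 ≤ w k x) ∧
      (∀ᵐ x, Tendsto (fun k => w k x) atTop (𝓝 (f x))) ∧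
      Tendsto (fun k => ∫ x, |w k x - f x|) atTop (𝓝 0) ∧
      ∀ k, ∫ x, ‖fderiv ℝ (w k) x‖ ≤ V := by
  let b : ℕ → ContDiffBump (0 : EuclideanSpace ℝ (Fin n)) := fun k =>
    ⟨1 / ((k:ℝ) + 1), 2 * (1 / ((k:ℝ) + 1)), by positivity, by
      have : 0 < 1 / ((k:ℝ) + 1) := by positivity
      linarith⟩
  let r : ℕ → EuclideanSpace ℝ (Fin n) → ℝ := fun k => (b k).normed volume
  let w : ℕ → EuclideanSpace ℝ (Fin n) → ℝ := fun k =>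
    r k ⋆[ContinuousLinearMap.lsmul ℝ ℝ] f
  have hrs : ∀ k, HasCompactSupport (r k) := fun k => (b k).hasCompactSupport_normed
  have hr0 : ∀ k x, 0 ≤ r k x := fun k x => (b k).nonneg_normed x
  have hri : ∀ k, Integrable (r k) := fun k => (b k).integrable_normed
  have hr1 : ∀ k, ∫ x, r k x = 1 := fun k => (b k).integral_normed
  have hrc : ∀ k, Continuous (r k) := fun k => (b k).continuous_normed
  have hwC : ∀ k, ContDiff ℝ 2 (w k) := fun k =>
    (hrs k).contDiff_convolution_left (n := 2) _ (b k).contDiff_normed hf.locallyIntegrable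
  have hws : ∀ k, HasCompactSupport (w k) := fun k => (hrs k).convolution _ hfs
  have hw0 : ∀ k x, 0 ≤ w k x := fun k x => by
    simp only [w, convolution_def, ContinuousLinearMap.lsmul_apply, smul_eq_mul]
    exact integral_nonneg fun t => mul_nonneg (hr0 k t) (hf0 _)
  have hwi : ∀ k, Integrable (w k) := fun k => (hri k).integrable_convolution _ hf
  have hwI : ∀ k, ∫ x, w k x = ∫ x, f x := fun k => by
    have := integral_convolution (ContinuousLinearMap.lsmul ℝ ℝ) (hri k) hf
    simp only [w]
    rw [this, hr1]; simp
  have hae : ∀ᵐ x, Tendsto (fun k => w k x) atTop (𝓝 (f x)) := by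
    refine ContDiffBump.ae_convolution_tendsto_right_of_locallyIntegrable (φ := b) (K := 2) ?_ ?_
      hf.locallyIntegrable
    · have := (tendsto_one_div_add_atTop_nhds_zero_nat (𝕜 := ℝ)).const_mul 2
      rw [mul_zero] at this
      exact this
    · exact Eventually.of_forall fun k => le_rfl
  refine ⟨w, hwC, hws, hw0, hae, ?_, fun k => ?_⟩
  · have h1 : ∀ k, ∫ x, |w k x - f x| = 2 * ∫ x, max (f x - w k x) 0 := by
      intro k
      have e : ∀ x, |w k x - f x| = (w k x - f x) + 2 * max (f x - w k x) 0 := by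
        intro x
        rcases le_total (f x) (w k x) with h | h
        · rw [abs_of_nonneg (by linarith), max_eq_right (by linarith)]; ring
        · rw [abs_of_nonpos (by linarith), max_eq_left (by linarith)]; ring
      simp only [e]
      have hp : Integrable fun x => max (f x - w k x) 0 := (hf.sub (hwi k)).pos_part
      have hs : Integrable (fun x => w k x - f x) := (hwi k).sub hf
      rw [integral_add hs (hp.const_mul 2), integral_sub (hwi k) hf, hwI,
        integral_const_mul]
      ring
    simp only [h1]
    have h2 : Tendsto (fun k => ∫ x, max (f x - w k x) 0) atTop (𝓝 (∫ _, (0:ℝ) ∂(volume : Measure (EuclideanSpace ℝ (Fin n))))) := by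
      refine tendsto_integral_of_dominated_convergence f ?_ hf ?_ ?_
      · exact fun k => (hf.sub (hwi k)).pos_part.aestronglyMeasurable
      · refine fun k => Eventually.of_forall fun x => ?_
        rw [Real.norm_of_nonneg (le_max_right _ _)]
        exact max_le (by linarith [hw0 k x]) (hf0 x)
      · filter_upwards [hae] with x hx
        have := (tendsto_const_nhds (x := f x)).sub hx |>.max (tendsto_const_nhds (x := (0:ℝ)))
        simpa using this
    simpa using h2.const_mul 2
  · exact grad_le_var (hwC k) (hws k) fun φ hφ hc hφ1 =>
      moll_var hf (hrc k) (hrs k) (hr0 k) (hr1 k) hV hφ hc hφ1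

lemma integrable_trunc {n : ℕ} {f : EuclideanSpace ℝ (Fin n) → ℝ} (hf : Integrable f)
    {c : ℝ} (hc : 0 ≤ c) : Integrable fun x => max (f x - c) 0 := by
  refine hf.norm.mono' ?_ (Eventually.of_forall fun x => ?_)
  · exact ((hf.aestronglyMeasurable.aemeasurable.sub_const c).max aemeasurable_const).aestronglyMeasurable
  · rw [Real.norm_of_nonneg (le_max_right _ _)]
    refine max_le ?_ (norm_nonneg _)
    have := Real.le_norm_self (f x)
    linarith

lemma core_limit {n : ℕ} {f : EuclideanSpace ℝ (Fin n) → ℝ} (hf : Integrable f) {V : ℝ}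
    {w : ℕ → EuclideanSpace ℝ (Fin n) → ℝ} (hwC : ∀ k, ContDiff ℝ 2 (w k))
    (hws : ∀ k, HasCompactSupport (w k))
    (hlim : Tendsto (fun k => ∫ x, |w k x - f x|) atTop (𝓝 0))
    (hVw : ∀ k, ∫ x, ‖fderiv ℝ (w k) x‖ ≤ V) {c R : ℝ} (hc0 : 0 ≤ c)
    (hR : ∀ᶠ k in atTop, ENNReal.ofReal R ≤
      ∫⁻ x in {x | w k x < c}, ENNReal.ofReal ‖fderiv ℝ (w k) x‖)
    {φ : EuclideanSpace ℝ (Fin n) → EuclideanSpace ℝ (Fin n)}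
    (hφ : ContDiff ℝ 1 φ) (hc : HasCompactSupport φ) (hφ1 : ∀ x, ‖φ x‖ ≤ 1) :
    (∫ x, max (f x - c) 0 * diverg φ x) + R ≤ V := by
  obtain ⟨C, hC⟩ := diverg_bound hφ hc
  have hdc := diverg_continuous hφ
  have hl : Tendsto (fun k => V + C * ∫ x, |w k x - f x|) atTop (𝓝 (V + C * 0)) :=
    (hlim.const_mul C).const_add V
  rw [mul_zero, add_zero] at hl
  refine ge_of_tendsto hl ?_
  filter_upwards [hR] with k hk
  have hw1 : ContDiff ℝ 1 (w k) := (hwC k).of_le (by norm_num)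
  have hwi : Integrable (w k) := hw1.continuous.integrable_of_hasCompactSupport (hws k)
  have hDi : Integrable fun x => ‖fderiv ℝ (w k) x‖ :=
    (hw1.continuous_fderiv one_ne_zero).norm.integrable_of_hasCompactSupport ((hws k).fderiv ℝ).norm
  have h1 := trunc_smooth hφ hc hφ1 hw1 (hws k) c
  have hm1 : MeasurableSet {x | w k x < c} :=
    measurableSet_lt hw1.continuous.measurable measurable_const
  have hm2 : MeasurableSet {x | c < w k x} :=
    measurableSet_lt measurable_const hw1.continuous.measurable
  have h2 : R ≤ ∫ x in {x | w k x < c}, ‖fderiv ℝ (w k) x‖ := by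
    rw [← ofReal_integral_eq_lintegral_ofReal hDi.integrableOn
      (Eventually.of_forall fun x => norm_nonneg _)] at hk
    exact (ENNReal.ofReal_le_ofReal_iff (integral_nonneg fun x => norm_nonneg _)).1 hk
  have h3 : (∫ x in {x | w k x < c}, ‖fderiv ℝ (w k) x‖) + ∫ x in {x | c < w k x}, ‖fderiv ℝ (w k) x‖
      ≤ ∫ x, ‖fderiv ℝ (w k) x‖ := by
    rw [← setIntegral_union _ hm2 hDi.integrableOn hDi.integrableOn]
    · exact setIntegral_le_integral hDi (Eventually.of_forall fun x => norm_nonneg _)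
    · rw [Set.disjoint_left]
      intro x hx hx'
      exact lt_asymm (show w k x < c from hx) (show c < w k x from hx')
  have hmd : ∀ g : EuclideanSpace ℝ (Fin n) → ℝ, Integrable g → Integrable fun x => g x * diverg φ x :=
    fun g hg => hg.mul_bdd (c := C) hdc.aestronglyMeasurable (Eventually.of_forall hC)
  have h4 : ∫ x, max (f x - c) 0 * diverg φ x ≤
      (∫ x, max (w k x - c) 0 * diverg φ x) + C * ∫ x, |w k x - f x| := by
    have ia := hmd _ (integrable_trunc hwi hc0)
    have ib : Integrable (fun x => C * |w k x - f x|) := (hwi.sub hf).abs.const_mul C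
    rw [← integral_const_mul, ← integral_add ia ib]
    refine integral_mono (hmd _ (integrable_trunc hf hc0)) (ia.add ib) fun x => ?_
    have h5 : |max (f x - c) 0 - max (w k x - c) 0| ≤ |w k x - f x| := by
      refine (abs_max_sub_max_le_abs _ _ _).trans ?_
      rw [sub_sub_sub_cancel_right, abs_sub_comm]
    have h6 : (max (f x - c) 0 - max (w k x - c) 0) * diverg φ x ≤ |w k x - f x| * C := by
      refine (le_abs_self _).trans ?_
      rw [abs_mul]
      exact mul_le_mul h5 (hC x) (abs_nonneg _) (abs_nonneg _)
    simp only
    linarith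
  linarith [hVw k]

lemma fatou_level {n : ℕ} {f : EuclideanSpace ℝ (Fin n) → ℝ} (hf : Integrable f)
    {w : ℕ → EuclideanSpace ℝ (Fin n) → ℝ} (hwC : ∀ k, Continuous (w k))
    (hae : ∀ᵐ x, Tendsto (fun k => w k x) atTop (𝓝 (f x))) {c : ℝ} {m : ℝ≥0∞}
    (hm : m < volume {x | c < f x}) : ∀ᶠ k in atTop, m ≤ volume {x | c < w k x} := by
  have hnm : NullMeasurableSet {x | c < f x} volume :=
    nullMeasurableSet_lt aemeasurable_const hf.aestronglyMeasurable.aemeasurable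
  have hmk : ∀ k, MeasurableSet {x | c < w k x} := fun k =>
    measurableSet_lt measurable_const (hwC k).measurable
  have h1 : volume {x | c < f x} ≤ liminf (fun k => volume {x | c < w k x}) atTop := by
    calc volume {x | c < f x} = ∫⁻ x, {x | c < f x}.indicator 1 x := (lintegral_indicator_one₀ hnm).symm
      _ ≤ ∫⁻ x, liminf (fun k => {x | c < w k x}.indicator (1 : EuclideanSpace ℝ (Fin n) → ℝ≥0∞) x) atTop := by
          refine lintegral_mono_ae ?_
          filter_upwards [hae] with x hx
          by_cases h : c < f x
          · rw [indicator_of_mem (show x ∈ {x | c < f x} from h)]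
            refine le_liminf_of_le (by isBoundedDefault) ?_
            filter_upwards [hx.eventually (lt_mem_nhds h)] with k hk
            rw [indicator_of_mem (show x ∈ {x | c < w k x} from hk)]
          · rw [indicator_of_notMem (show x ∉ {x | c < f x} from h)]
            exact zero_le
      _ ≤ liminf (fun k => ∫⁻ x, {x | c < w k x}.indicator (1 : EuclideanSpace ℝ (Fin n) → ℝ≥0∞) x) atTop :=
          lintegral_liminf_le fun k => measurable_one.indicator (hmk k)
      _ = _ := by simp only [lintegral_indicator_one (hmk _)]
  exact (eventually_lt_of_lt_liminf (hm.trans_le h1)).mono fun k hk => hk.le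

lemma core_bdd {n : ℕ} {f : EuclideanSpace ℝ (Fin n) → ℝ} (hf : Integrable f)
    (hfs : HasCompactSupport f) (hf0 : ∀ x, 0 ≤ f x) {V : ℝ} (hV : ∀ p ∈ varSet f, p ≤ V)
    {c : ℝ} (hc0 : 0 ≤ c) : ∀ p ∈ varSet (fun x => max (f x - c) 0), p ≤ V := by
  rintro p ⟨φ, hφ, hc, hφ1, rfl⟩
  obtain ⟨w, hwC, hws, -, -, hl, hVw⟩ := exists_approx hf hfs hf0 hV
  have := core_limit hf hwC hws hl hVw (R := 0) hc0 (by simp) hφ hc hφ1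
  simpa using this

lemma core_main {n : ℕ} (hn : 0 < n) {f : EuclideanSpace ℝ (Fin n) → ℝ} (hf : Integrable f)
    (hfs : HasCompactSupport f) (hf0 : ∀ x, 0 ≤ f x) {V : ℝ} (hV : ∀ p ∈ varSet f, p ≤ V)
    {c m : ℝ} (hc0 : 0 < c) (hm : 0 < m)
    (hlev : ∀ t, 0 < t → t < c → ENNReal.ofReal m ≤ volume {x | t < f x}) :
    ∀ p ∈ varSet (fun x => max (f x - c) 0),
      p + n * omegaN n ^ ((1:ℝ) / n) * m ^ (1 - (1 : ℝ) / n) * c ≤ V := by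
  rintro p ⟨φ, hφ, hc, hφ1, rfl⟩
  obtain ⟨w, hwC, hws, hw0, hae, hl, hVw⟩ := exists_approx hf hfs hf0 hV
  have hw1 : ∀ k, ContDiff ℝ 1 (w k) := fun k => (hwC k).of_le (by norm_num)
  have hdc := diverg_continuous hφ
  have hdi : Integrable (diverg φ) := hdc.integrable_of_hasCompactSupport (diverg_compact hc)
  obtain ⟨C, hC⟩ := diverg_bound hφ hc
  have hmd : ∀ g : EuclideanSpace ℝ (Fin n) → ℝ, Integrable g → Integrable fun x => g x * diverg φ x :=
    fun g hg => hg.mul_bdd (c := C) hdc.aestronglyMeasurable (Eventually.of_forall hC)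
  set k0 := n * omegaN n ^ ((1:ℝ) / n) with hk0
  set I := ∫ x, |diverg φ x| with hI
  have claim : ∀ θ ∈ Ioo (0:ℝ) 1, (∫ x, max (f x - c) 0 * diverg φ x) +
      k0 * (θ * m) ^ (1 - (1 : ℝ) / n) * (θ * c) ≤ V + (1 - θ) * c * I := by
    rintro θ ⟨hθ0, hθ1⟩
    have hθc : θ * c < c := by nlinarith
    have hθc0 : 0 < θ * c := by positivity
    have hθm : θ * m < m := by nlinarith
    have hlt : ENNReal.ofReal (θ * m) < volume {x | θ * c < f x} :=
      lt_of_lt_of_le ((ENNReal.ofReal_lt_ofReal_iff hm).2 hθm) (hlev _ hθc0 hθc)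
    have h1 := core_limit hf hwC hws hl hVw (c := θ * c)
      (R := k0 * (θ * m) ^ (1 - (1 : ℝ) / n) * (θ * c)) hθc0.le (by
        filter_upwards [fatou_level hf (fun k => (hw1 k).continuous) hae hlt] with k hk
        exact iso_smooth hn (hw1 k) (hws k) (hw0 k) hθc0 (by positivity) hk) hφ hc hφ1
    have h2 : ∫ x, max (f x - c) 0 * diverg φ x ≤
        (∫ x, max (f x - θ * c) 0 * diverg φ x) + (1 - θ) * c * I := by
      have ia := hmd _ (integrable_trunc hf hθc0.le)
      have ib := hdi.abs.const_mul ((1 - θ) * c)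
      rw [hI, ← integral_const_mul, ← integral_add ia ib]
      refine integral_mono (hmd _ (integrable_trunc hf hc0.le)) (ia.add ib) fun x => ?_
      have h5 : |max (f x - c) 0 - max (f x - θ * c) 0| ≤ (1 - θ) * c := by
        refine (abs_max_sub_max_le_abs _ _ _).trans ?_
        rw [abs_le]; constructor <;> nlinarith
      have h6 : (max (f x - c) 0 - max (f x - θ * c) 0) * diverg φ x ≤ (1 - θ) * c * |diverg φ x| := by
        refine (le_abs_self _).trans ?_
        rw [abs_mul]
        exact mul_le_mul_of_nonneg_right h5 (abs_nonneg _)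
      simp only
      linarith
    linarith
  have hexp : 0 ≤ 1 - (1:ℝ) / n := by
    have : (1:ℝ) ≤ n := by exact_mod_cast hn
    rw [sub_nonneg, div_le_one (by linarith)]; exact this
  have c1 : Continuous fun θ : ℝ => (∫ x, max (f x - c) 0 * diverg φ x) +
      k0 * (θ * m) ^ (1 - (1 : ℝ) / n) * (θ * c) := by
    have : Continuous fun θ : ℝ => (θ * m) ^ (1 - (1 : ℝ) / n) :=
      (continuous_id.mul continuous_const).rpow_const fun x => Or.inr hexp
    fun_prop
  have c2 : Continuous fun θ : ℝ => V + (1 - θ) * c * I := by fun_prop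
  have l1 := (c1.tendsto 1).mono_left (nhdsWithin_le_nhds (s := Iio 1))
  have l2 := (c2.tendsto 1).mono_left (nhdsWithin_le_nhds (s := Iio 1))
  have := le_of_tendsto_of_tendsto l1 l2 (by
    filter_upwards [Ioo_mem_nhdsLT (zero_lt_one (α := ℝ))] with θ hθ
    exact claim θ hθ)
  simpa using this

lemma zero_mem_varSet {n : ℕ} (w : EuclideanSpace ℝ (Fin n) → ℝ) : (0:ℝ) ∈ varSet w := by
  refine ⟨fun _ => 0, contDiff_const, HasCompactSupport.zero, by simp, ?_⟩
  have : ∀ x, diverg (fun _ : EuclideanSpace ℝ (Fin n) => (0 : EuclideanSpace ℝ (Fin n))) x = 0 := by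
    intro x; simp [diverg]
  simp [this]

lemma T_nonneg {n : ℕ} (w : EuclideanSpace ℝ (Fin n) → ℝ) : 0 ≤ totalVar w :=
  Real.sSup_nonneg' ⟨0, zero_mem_varSet w, le_rfl⟩

lemma trunc_compact {n : ℕ} {f : EuclideanSpace ℝ (Fin n) → ℝ} (hfs : HasCompactSupport f)
    {c : ℝ} (hc : 0 ≤ c) : HasCompactSupport fun x => max (f x - c) 0 :=
  hfs.comp_left (g := fun y => max (y - c) 0) (by simpa using hc)

lemma T_bdd {n : ℕ} {u : EuclideanSpace ℝ (Fin n) → ℝ} (hu : IsBV u)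
    (hus : HasCompactSupport u) (hu0 : ∀ x, 0 ≤ u x) {a : ℝ} (ha : 0 ≤ a) :
    ∀ p ∈ varSet (fun x => max (u x - a) 0), p ≤ totalVar u :=
  core_bdd hu.1 hus hu0 (fun _ hp => le_csSup hu.2 hp) ha

lemma T_layer {n : ℕ} (hn : 0 < n) {u : EuclideanSpace ℝ (Fin n) → ℝ} (hu : IsBV u)
    (hus : HasCompactSupport u) (hu0 : ∀ x, 0 ≤ u x) {a b m : ℝ} (ha : 0 ≤ a) (hab : a < b)
    (hm : 0 < m) (hlev : ∀ t, a < t → t < b → ENNReal.ofReal m ≤ volume {x | t < u x}) :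
    totalVar (fun x => max (u x - b) 0) +
      n * omegaN n ^ ((1:ℝ) / n) * m ^ (1 - (1 : ℝ) / n) * (b - a) ≤
      totalVar (fun x => max (u x - a) 0) := by
  have h := core_main hn (integrable_trunc hu.1 ha) (trunc_compact hus ha)
    (fun x => le_max_right _ _)
    (V := totalVar (fun x => max (u x - a) 0))
    (fun p hp => le_csSup ⟨_, T_bdd hu hus hu0 ha⟩ hp) (sub_pos.2 hab) hm (fun t ht0 ht => by
      refine (hlev (a + t) (by linarith) (by linarith)).trans (measure_mono fun x hx => ?_)
      have hx : a + t < u x := hx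
      exact lt_max_of_lt_left (show t < u x - a by linarith))
  have e : (fun x => max (max (u x - a) 0 - (b - a)) 0) = fun x => max (u x - b) 0 := by
    funext x
    rcases le_total (u x) a with h | h
    · rw [max_eq_right (by linarith : u x - a ≤ 0), max_eq_right (by linarith),
        max_eq_right (by linarith)]
    · rw [max_eq_left (by linarith : 0 ≤ u x - a)]; congr 1; ring
  rw [e] at h
  rw [← le_sub_iff_add_le]
  exact csSup_le ⟨0, zero_mem_varSet _⟩ fun p hp => by linarith [h p hp]

lemma D_nonneg {n : ℕ} (u : EuclideanSpace ℝ (Fin n) → ℝ) (s : ℝ) : 0 ≤ decRearr volume u s :=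
  Real.sInf_nonneg fun _ ht => ht.1.le

lemma D_bdd {n : ℕ} (u : EuclideanSpace ℝ (Fin n) → ℝ) (s : ℝ) :
    BddBelow {t : ℝ | 0 < t ∧ volume {x | t < |u x|} ≤ ENNReal.ofReal s} :=
  ⟨0, fun _ ht => ht.1.le⟩

lemma D_level {n : ℕ} {u : EuclideanSpace ℝ (Fin n) → ℝ} (hu0 : ∀ x, 0 ≤ u x) {s t : ℝ}
    (ht : 0 < t) (hts : t < decRearr volume u s) : ENNReal.ofReal s ≤ volume {x | t < u x} := by
  by_contra! h
  refine absurd (csInf_le (D_bdd u s) (a := t) ⟨ht, ?_⟩) (not_le.2 hts)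
  simpa only [abs_of_nonneg (hu0 _)] using h.le

lemma D_nonempty {n : ℕ} {u : EuclideanSpace ℝ (Fin n) → ℝ} (hu : Integrable u) {s : ℝ}
    (hs : 0 < s) : {t : ℝ | 0 < t ∧ volume {x | t < |u x|} ≤ ENNReal.ofReal s}.Nonempty := by
  set I := ∫ x, |u x| with hI
  have hI0 : 0 ≤ I := integral_nonneg fun x => abs_nonneg _
  have ht : 0 < (I + 1) / s := by positivity
  refine ⟨(I + 1) / s, ht, ?_⟩
  have h := mul_meas_ge_le_integral_of_nonneg (Eventually.of_forall fun x => abs_nonneg (u x)) hu.abs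
    ((I + 1) / s)
  have hfin : volume {x | (I + 1) / s ≤ |u x|} ≠ ⊤ := (hu.abs.measure_ge_lt_top ht).ne
  have hsub : {x | (I + 1) / s < |u x|} ⊆ {x | (I + 1) / s ≤ |u x|} := fun x hx =>
    le_of_lt (show (I + 1) / s < |u x| from hx)
  refine (measure_mono hsub).trans ((ENNReal.le_ofReal_iff_toReal_le hfin hs.le).2 ?_)
  have h' : (I + 1) / s * (volume {x | (I + 1) / s ≤ |u x|}).toReal ≤ I := h
  by_contra! hc
  have : (I + 1) / s * s < (I + 1) / s * (volume {x | (I + 1) / s ≤ |u x|}).toReal :=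
    mul_lt_mul_of_pos_left hc ht
  rw [div_mul_cancel₀ _ hs.ne'] at this
  linarith

lemma D_anti {n : ℕ} {u : EuclideanSpace ℝ (Fin n) → ℝ} (hu : Integrable u) {s s' : ℝ}
    (hs : 0 < s) (h : s ≤ s') : decRearr volume u s' ≤ decRearr volume u s :=
  csInf_le_csInf (D_bdd u s') (D_nonempty hu hs) fun _ ht =>
    ⟨ht.1, ht.2.trans (ENNReal.ofReal_le_ofReal h)⟩

lemma D_zero {n : ℕ} {u : EuclideanSpace ℝ (Fin n) → ℝ} {Ω : Set (EuclideanSpace ℝ (Fin n))}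
    (hz : ∀ x ∉ Ω, u x = 0) {s : ℝ} (h : volume Ω ≤ ENNReal.ofReal s) :
    decRearr volume u s = 0 := by
  refine le_antisymm (le_of_forall_pos_le_add fun e he => ?_) (D_nonneg u s)
  rw [zero_add]
  refine csInf_le (D_bdd u s) ⟨he, (measure_mono fun x hx => ?_).trans h⟩
  by_contra hx'
  have hx : e < |u x| := hx
  rw [hz x hx', abs_zero] at hx
  linarith

lemma D_step {n : ℕ} (hn : 0 < n) {u : EuclideanSpace ℝ (Fin n) → ℝ} (hu : IsBV u)
    (hus : HasCompactSupport u) (hu0 : ∀ x, 0 ≤ u x) {s s' : ℝ} (hs : 0 < s) (h : s ≤ s') :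
    totalVar (fun x => max (u x - decRearr volume u s) 0) +
      n * omegaN n ^ ((1:ℝ) / n) * s ^ (1 - (1 : ℝ) / n) *
        (decRearr volume u s - decRearr volume u s') ≤
      totalVar (fun x => max (u x - decRearr volume u s') 0) := by
  rcases (D_anti hu.1 hs h).eq_or_lt with e | hlt
  · rw [e]; simp
  · exact T_layer hn hu hus hu0 (D_nonneg u s') hlt hs fun t ht ht' =>
      D_level hu0 ((D_nonneg u s').trans_lt ht) ht'

/-- The abstract one dimensional summation argument. -/
lemma sum_arg {D : ℝ → ℝ} {q k0 : ℝ} (hq0 : 0 ≤ q) (hq1 : q ≤ 1) (hk0 : 0 < k0) (σ : Measure ℝ)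
    (hD : ∀ s, 0 ≤ D s)
    (hstep : ∀ s s', 0 < s → s ≤ s' → ENNReal.ofReal (k0 * s ^ q * (D s - D s')) ≤ σ (Ioc s s'))
    {S : ℝ} (hS : ∀ s, S ≤ s → D s = 0) {r : ℝ} (hr : 1 < r) {s : ℝ} (hs : 0 < s) :
    ENNReal.ofReal (D s) ≤
      ENNReal.ofReal r * ∫⁻ τ in Ioi s, ENNReal.ofReal (k0 * τ ^ q)⁻¹ ∂σ := by
  have hr0 : 0 < r := by linarith
  have one : ∀ s, 0 < s → ENNReal.ofReal (D s - D (s * r)) ≤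
      ENNReal.ofReal r * ∫⁻ τ in Ioc s (s * r), ENNReal.ofReal (k0 * τ ^ q)⁻¹ ∂σ := by
    intro s hs
    have hsr : s ≤ s * r := by nlinarith
    have hsq : 0 < k0 * s ^ q := by positivity
    have h1 : ENNReal.ofReal (k0 * (s * r) ^ q)⁻¹ * σ (Ioc s (s * r)) ≤
        ∫⁻ τ in Ioc s (s * r), ENNReal.ofReal (k0 * τ ^ q)⁻¹ ∂σ := by
      rw [← setLIntegral_const]
      refine setLIntegral_mono' measurableSet_Ioc fun τ hτ => ENNReal.ofReal_le_ofReal ?_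
      have hτ0 : 0 < τ := hs.trans hτ.1
      have := Real.rpow_le_rpow hτ0.le hτ.2 hq0
      gcongr
    have h2 : (k0 * s ^ q)⁻¹ ≤ r * (k0 * (s * r) ^ q)⁻¹ := by
      rw [Real.mul_rpow hs.le hr0.le]
      have h3 : r ^ q ≤ r := by
        simpa using Real.rpow_le_rpow_of_exponent_le hr.le hq1
      have h4 : 0 < r ^ q := by positivity
      have e : r * (k0 * (s ^ q * r ^ q))⁻¹ = (k0 * s ^ q)⁻¹ * (r * (r ^ q)⁻¹) := by
        rw [← mul_assoc k0, mul_inv (k0 * s ^ q)]; ring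
      rw [e]
      refine le_mul_of_one_le_right (by positivity) ?_
      rw [← div_eq_mul_inv, one_le_div h4]; exact h3
    calc ENNReal.ofReal (D s - D (s * r))
        = ENNReal.ofReal (k0 * s ^ q)⁻¹ * ENNReal.ofReal (k0 * s ^ q * (D s - D (s * r))) := by
          rw [← ENNReal.ofReal_mul (by positivity), ← mul_assoc, inv_mul_cancel₀ hsq.ne', one_mul]
      _ ≤ ENNReal.ofReal (r * (k0 * (s * r) ^ q)⁻¹) * σ (Ioc s (s * r)) :=
          mul_le_mul' (ENNReal.ofReal_le_ofReal h2) (hstep _ _ hs hsr)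
      _ = ENNReal.ofReal r * (ENNReal.ofReal (k0 * (s * r) ^ q)⁻¹ * σ (Ioc s (s * r))) := by
          rw [ENNReal.ofReal_mul hr0.le, mul_assoc]
      _ ≤ _ := by gcongr
  have ind : ∀ N : ℕ, ∀ s, 0 < s → S ≤ s * r ^ N → ENNReal.ofReal (D s) ≤
      ENNReal.ofReal r * ∫⁻ τ in Ioi s, ENNReal.ofReal (k0 * τ ^ q)⁻¹ ∂σ := by
    intro N
    induction N with
    | zero =>
      intro s hs h
      rw [hS s (by simpa using h)]; simp
    | succ N ih =>
      intro s hs h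
      have hsr : s ≤ s * r := by nlinarith
      have h1 := ih (s * r) (by positivity) (by rw [mul_assoc, ← pow_succ']; exact h)
      calc ENNReal.ofReal (D s) = ENNReal.ofReal ((D s - D (s * r)) + D (s * r)) := by
            rw [sub_add_cancel]
        _ ≤ _ := ENNReal.ofReal_add_le
        _ ≤ _ := add_le_add (one s hs) h1
        _ = _ := by
          rw [← mul_add, ← lintegral_union measurableSet_Ioi
            (Set.disjoint_left.2 fun x hx hx' => not_lt.2 hx.2 hx'), Ioc_union_Ioi_eq_Ioi hsr]
  obtain ⟨N, hN⟩ := pow_unbounded_of_one_lt (S / s) hr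
  exact ind N s hs (by rw [div_lt_iff₀ hs] at hN; linarith)

theorem rearrangement_pointwise_comparison {n : ℕ} (hn : 0 < n)
    (Ω : Set (EuclideanSpace ℝ (Fin n))) (hΩo : IsOpen Ω)
    (hΩb : Bornology.IsBounded Ω) (hΩp : HasFinPerim Ω)
    (u : EuclideanSpace ℝ (Fin n) → ℝ) (hu : IsBV u)
    (hu_nonneg : ∀ x, 0 ≤ u x) (hu_zero : ∀ x ∉ Ω, u x = 0)
    -- `G s = |D (u - u*(s))₊|(ℝⁿ)`
    (G : ℝ → ℝ)
    (hG : ∀ s, G s = totalVar (fun x => max (u x - decRearr volume u s) 0))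
    -- `σ` is the positive measure with `G s = σ((0,s])` for all `s ≥ 0`
    (σ : Measure ℝ) (hσ : ∀ s, 0 ≤ s → σ (Set.Ioc 0 s) = ENNReal.ofReal (G s))
    -- `v(s) = ∫_{(s,∞)} (n ωₙ^{1/n} τ^{1-1/n})⁻¹ dσ(τ)`
    (v : ℝ → ℝ)
    (hv : ∀ s, v s =
      ∫ τ in Set.Ioi s, (n * omegaN n ^ ((1 : ℝ) / n) * τ ^ (1 - (1 : ℝ) / n))⁻¹ ∂σ) :
    ∀ᵐ s ∂(volume.restrict (Set.Ici (0 : ℝ))), decRearr volume u s ≤ v s := by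
  have hus : HasCompactSupport u :=
    HasCompactSupport.intro hΩb.isCompact_closure fun x hx =>
      hu_zero x fun h => hx (subset_closure h)
  set q := 1 - (1:ℝ) / n with hq
  set k0 := n * omegaN n ^ ((1:ℝ) / n) with hk0
  have hk0p : 0 < k0 := by
    have := omegaN_pos n
    have : (0:ℝ) < n := by exact_mod_cast hn
    positivity
  have hn1 : (1:ℝ) ≤ n := by exact_mod_cast hn
  have hq0 : 0 ≤ q := by
    rw [hq, sub_nonneg, div_le_one (by linarith)]; exact hn1
  have hq1 : q ≤ 1 := by
    have : (0:ℝ) ≤ 1 / n := by positivity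
    linarith
  have hG0 : ∀ s, 0 ≤ G s := fun s => by rw [hG]; exact T_nonneg _
  have hGV : ∀ s, G s ≤ totalVar u := fun s => by
    rw [hG]; exact csSup_le ⟨0, zero_mem_varSet _⟩ (T_bdd hu hus hu_nonneg (D_nonneg u s))
  have hstep : ∀ s s', 0 < s → s ≤ s' → ENNReal.ofReal (k0 * s ^ q *
      (decRearr volume u s - decRearr volume u s')) ≤ σ (Ioc s s') := by
    intro s s' hs h
    have h1 := D_step hn hu hus hu_nonneg hs h
    rw [← hG, ← hG] at h1
    have h2 : σ (Ioc 0 s') = σ (Ioc 0 s) + σ (Ioc s s') := by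
      rw [← measure_union (Set.disjoint_left.2 fun x hx hx' => not_lt.2 hx.2 hx'.1)
        measurableSet_Ioc, Ioc_union_Ioc_eq_Ioc hs.le h]
    rw [hσ _ hs.le, hσ _ (hs.le.trans h)] at h2
    have hnn : 0 ≤ k0 * s ^ q * (decRearr volume u s - decRearr volume u s') :=
      mul_nonneg (by positivity) (sub_nonneg.2 (D_anti hu.1 hs h))
    have h3 : ENNReal.ofReal (G s) + ENNReal.ofReal (k0 * s ^ q *
        (decRearr volume u s - decRearr volume u s')) ≤ ENNReal.ofReal (G s) + σ (Ioc s s') := by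
      rw [← h2, ← ENNReal.ofReal_add (hG0 s) hnn]
      exact ENNReal.ofReal_le_ofReal h1
    exact (ENNReal.add_le_add_iff_left ENNReal.ofReal_ne_top).1 h3
  have hΩfin : volume Ω ≠ ⊤ := hΩb.measure_lt_top.ne
  have hS : ∀ s, (volume Ω).toReal ≤ s → decRearr volume u s = 0 := fun s hs =>
    D_zero hu_zero (by rw [← ENNReal.ofReal_toReal hΩfin]; exact ENNReal.ofReal_le_ofReal hs)
  have hfin : σ (Ioi 0) < ⊤ := by
    have hU : (Ioi (0:ℝ)) = ⋃ k : ℕ, Ioc (0:ℝ) k := by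
      ext x
      simp only [mem_Ioi, mem_iUnion, mem_Ioc]
      constructor
      · intro hx
        obtain ⟨k, hk⟩ := exists_nat_ge x
        exact ⟨k, hx, hk⟩
      · rintro ⟨k, hk⟩; exact hk.1
    have hmono : Monotone fun k : ℕ => Ioc (0:ℝ) k := fun a b hab =>
      Ioc_subset_Ioc_right (by exact_mod_cast hab)
    rw [hU, hmono.measure_iUnion]
    refine lt_of_le_of_lt (iSup_le fun k => ?_) (ENNReal.ofReal_lt_top (r := totalVar u))
    rw [hσ _ (Nat.cast_nonneg k)]
    exact ENNReal.ofReal_le_ofReal (hGV _)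
  have main : ∀ s, 0 < s → decRearr volume u s ≤ v s := by
    intro s hs
    have hfs : σ (Ioi s) < ⊤ := (measure_mono (Ioi_subset_Ioi hs.le)).trans_lt hfin
    have hpos : ∀ᵐ τ ∂σ.restrict (Ioi s), 0 ≤ (k0 * τ ^ q)⁻¹ := by
      filter_upwards [ae_restrict_mem measurableSet_Ioi] with τ hτ
      have : 0 < τ := hs.trans hτ
      positivity
    have hInt : IntegrableOn (fun τ : ℝ => (k0 * τ ^ q)⁻¹) (Ioi s) σ := by
      have hc : IntegrableOn (fun _ : ℝ => (k0 * s ^ q)⁻¹) (Ioi s) σ :=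
        integrableOn_const hfs.ne
      refine Integrable.mono' hc ?_ ?_
      · have : Measurable fun τ : ℝ => (k0 * τ ^ q)⁻¹ := by fun_prop
        exact this.aestronglyMeasurable
      · filter_upwards [ae_restrict_mem measurableSet_Ioi] with τ hτ
        have hτ0 : 0 < τ := hs.trans hτ
        rw [Real.norm_of_nonneg (by positivity)]
        have := Real.rpow_le_rpow hs.le (le_of_lt hτ) hq0
        gcongr
    have hv0 : 0 ≤ v s := by rw [hv]; exact integral_nonneg_of_ae hpos
    have hr : ∀ r : ℝ, 1 < r → decRearr volume u s ≤ r * v s := by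
      intro r hr
      have h := sum_arg hq0 hq1 hk0p σ (D_nonneg u) hstep hS hr hs
      rw [← ofReal_integral_eq_lintegral_ofReal hInt hpos, ← hv,
        ← ENNReal.ofReal_mul (by linarith)] at h
      exact (ENNReal.ofReal_le_ofReal_iff (by positivity)).1 h
    have l : Tendsto (fun r : ℝ => r * v s) (𝓝[>] 1) (𝓝 (1 * v s)) :=
      ((continuous_id.mul continuous_const).tendsto 1).mono_left nhdsWithin_le_nhds
    rw [one_mul] at l
    refine ge_of_tendsto l ?_
    filter_upwards [self_mem_nhdsWithin] with r h
    exact hr r h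
  rw [← restrict_Ioi_eq_restrict_Ici]
  filter_upwards [ae_restrict_mem measurableSet_Ioi] with s hs
  exact main s hs
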